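/- arXiv:2512.21143 — 2 statements merged into one kernel-verified Lean document; each statement's English description precedes it below -/
import Mathlib

section
/- Let q be an odd square prime power. Then PSL(2,q) partitions the set of Baer sublines of PG(1,q) into exactly two orbits 𝓑₁, 𝓑₂ of equal size, and for i=1,2 the incidence structure D_i = (PG(1,q), 𝓑_i) is a 2-(q+1, √q+1, (√q+1)/2) design; D₁ and D₂ are isomorphic via any element of PΓL(2,q) ∖ PΣL(2,q); and every group G with PSL(2,q) ⊴ G ≤ PΣL(2,q) acts flag-transitively on D_i. In particular, for q=25 each D_i is a 2-(26,6,3) design admitting PSL(2,25) ⊴ G ≤ PΣL(2,25) as a flag-transitive automorphism group. -/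
/-!
Let `GL(2,F)` act on subsets of the projective line, and let `H` be its subgroup of index two
formed by the matrices of square determinant; the image of `H` is `PSL(2,F)`. The stabilizer of the
canonical subline is `Fˣ · GL(2,K)`, and it lies in `H` because every element of `K` is a square
in `F`. Hence the single `GL(2,F)`-orbit of Baer sublines splits into two `H`-orbits, and the
flag-transitivity of `GL(2,F)` is inherited by `H` on each of them.

The sublines through `[1 : 0]` and `[0 : 1]` correspond to the cosets of `Kˣ` in `Fˣ`, so there are
`√q + 1` of them. A diagonal matrix of nonsquare determinant fixes both points and interchanges the
two orbits, so each orbit contains half of these sublines. Field automorphisms preserve the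
canonical subline and squares, so `v ↦ g · σ(v)` interchanges the two orbits exactly when `det g`
is a nonsquare.
-/

open scoped Pointwise
open Matrix Projectivization

noncomputable section

namespace FT

variable (F : Type) [Field F]

/-- The projective line `PG(1,q)` over a field `F`. -/
abbrev PG1 := Projectivization F (Fin 2 → F)

/-- The semilinear bijection of `F²` attached to a field automorphism `σ` and a
matrix `g ∈ GL(2,F)`, namely `v ↦ g ⬝ (σ ∘ v)`. -/
def semilinearAux (σ : F ≃+* F) (g : GL (Fin 2) F) :
    (Fin 2 → F) →ₛₗ[(σ : F →+* F)] (Fin 2 → F) where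
  toFun v := (g : Matrix (Fin 2) (Fin 2) F).mulVec (fun i => σ (v i))
  map_add' v w := show (g : Matrix (Fin 2) (Fin 2) F).mulVec (fun i => σ ((v + w) i)) =
      (g : Matrix (Fin 2) (Fin 2) F).mulVec (fun i => σ (v i)) +
        (g : Matrix (Fin 2) (Fin 2) F).mulVec (fun i => σ (w i)) by
    have h1 : (fun i => σ ((v + w) i)) = (fun i => σ (v i)) + (fun i => σ (w i)) := by
      funext i; simp
    rw [h1, Matrix.mulVec_add]
  map_smul' c v := show (g : Matrix (Fin 2) (Fin 2) F).mulVec (fun i => σ ((c • v) i)) =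
      σ c • (g : Matrix (Fin 2) (Fin 2) F).mulVec (fun i => σ (v i)) by
    have h1 : (fun i => σ ((c • v) i)) = σ c • (fun i => σ (v i)) := by
      funext i; simp [mul_comm]
    rw [h1, Matrix.mulVec_smul]

lemma semilinearAux_apply (σ : F ≃+* F) (g : GL (Fin 2) F) (v : Fin 2 → F) :
    semilinearAux F σ g v = (g : Matrix (Fin 2) (Fin 2) F).mulVec (fun i => σ (v i)) := rfl

lemma coe_unitsMap (σ : F →+* F) (g : GL (Fin 2) F) :
    ((Units.map σ.mapMatrix.toMonoidHom g : GL (Fin 2) F) : Matrix (Fin 2) (Fin 2) F) =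
      (g : Matrix (Fin 2) (Fin 2) F).map σ := rfl

lemma semilinearAux_injective (σ : F ≃+* F) (g : GL (Fin 2) F) :
    Function.Injective (semilinearAux F σ g) := by
  intro v w h
  letI := g.invertible
  have hinj : Function.Injective ((g : Matrix (Fin 2) (Fin 2) F).mulVec) :=
    Matrix.mulVec_injective_of_invertible _
  have h' : (g : Matrix (Fin 2) (Fin 2) F).mulVec (fun i => σ (v i)) =
      (g : Matrix (Fin 2) (Fin 2) F).mulVec (fun i => σ (w i)) := h
  have h2 := hinj h'
  funext i
  exact σ.injective (congrFun h2 i)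

lemma semilinearAux_cancel (σ : F ≃+* F) (g : GL (Fin 2) F) (v : Fin 2 → F) :
    semilinearAux F σ.symm (Units.map (σ.symm : F →+* F).mapMatrix.toMonoidHom g⁻¹)
      (semilinearAux F σ g v) = v := by
  simp only [semilinearAux_apply, coe_unitsMap]
  have h1 : (fun i => σ.symm (((g : Matrix (Fin 2) (Fin 2) F).mulVec
      (fun i => σ (v i))) i)) = ((g : Matrix (Fin 2) (Fin 2) F).map (σ.symm : F →+* F)).mulVec
        (fun i => σ.symm (σ (v i))) := by
    funext i
    exact RingHom.map_mulVec (σ.symm : F →+* F) _ _ i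
  rw [h1]
  simp only [RingEquiv.symm_apply_apply]
  rw [Matrix.mulVec_mulVec, ← Matrix.map_mul]
  have hgg : ((g⁻¹ : GL (Fin 2) F) : Matrix (Fin 2) (Fin 2) F) *
      ((g : GL (Fin 2) F) : Matrix (Fin 2) (Fin 2) F) = 1 := by
    rw [← Units.val_mul, inv_mul_cancel g, Units.val_one]
  rw [hgg, Matrix.map_one _ (map_zero _) (map_one _), Matrix.one_mulVec]

lemma semilinearAux_cancel' (σ : F ≃+* F) (g : GL (Fin 2) F) (v : Fin 2 → F) :
    semilinearAux F σ g
      (semilinearAux F σ.symm (Units.map (σ.symm : F →+* F).mapMatrix.toMonoidHom g⁻¹) v) = v := by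
  simp only [semilinearAux_apply, coe_unitsMap]
  have h1 : (fun i => σ ((((g⁻¹ : GL (Fin 2) F) : Matrix (Fin 2) (Fin 2) F).map
      (σ.symm : F →+* F)).mulVec (fun i => σ.symm (v i)) i)) =
      ((((g⁻¹ : GL (Fin 2) F) : Matrix (Fin 2) (Fin 2) F).map (σ.symm : F →+* F)).map
        (σ : F →+* F)).mulVec (fun i => σ (σ.symm (v i))) := by
    funext i
    exact RingHom.map_mulVec (σ : F →+* F) _ _ i
  rw [h1]
  simp only [RingEquiv.apply_symm_apply]
  rw [Matrix.map_map]
  have h2 : ((σ : F →+* F) : F → F) ∘ ((σ.symm : F →+* F) : F → F) = id := by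
    funext x; simp
  rw [h2, Matrix.map_id, Matrix.mulVec_mulVec]
  have hgg : ((g : GL (Fin 2) F) : Matrix (Fin 2) (Fin 2) F) *
      ((g⁻¹ : GL (Fin 2) F) : Matrix (Fin 2) (Fin 2) F) = 1 := by
    rw [← Units.val_mul, mul_inv_cancel g, Units.val_one]
  rw [hgg, Matrix.one_mulVec]

/-- The permutation of the projective line `PG(1,F)` induced by the projective semilinear
transformation with companion field automorphism `σ` and matrix `g ∈ GL(2,F)`. -/
def projSemilinear (σ : F ≃+* F) (g : GL (Fin 2) F) : Equiv.Perm (PG1 F) where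
  toFun := Projectivization.map (semilinearAux F σ g) (semilinearAux_injective F σ g)
  invFun := Projectivization.map
    (semilinearAux F σ.symm (Units.map (σ.symm : F →+* F).mapMatrix.toMonoidHom g⁻¹))
    (semilinearAux_injective F _ _)
  left_inv := by
    intro p
    induction p using Projectivization.ind with
    | h v hv =>
      rw [Projectivization.map_mk, Projectivization.map_mk, Projectivization.mk_eq_mk_iff]
      exact ⟨1, by rw [one_smul]; exact (semilinearAux_cancel F σ g v).symm⟩
  right_inv := by
    intro p
    induction p using Projectivization.ind with
    | h v hv =>
      rw [Projectivization.map_mk, Projectivization.map_mk, Projectivization.mk_eq_mk_iff]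
      exact ⟨1, by rw [one_smul]; exact (semilinearAux_cancel' F σ g v).symm⟩

/-- `PGL(2,F)` as a group of permutations of the projective line. -/
def PGLsub : Subgroup (Equiv.Perm (PG1 F)) :=
  Subgroup.closure {e | ∃ g : GL (Fin 2) F, e = projSemilinear F (RingEquiv.refl F) g}

/-- `PSL(2,F)` as a group of permutations of the projective line. -/
def PSLsub : Subgroup (Equiv.Perm (PG1 F)) :=
  Subgroup.closure {e | ∃ s : Matrix.SpecialLinearGroup (Fin 2) F,
    e = projSemilinear F (RingEquiv.refl F) (Matrix.SpecialLinearGroup.toGL s)}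

/-- `PΣL(2,F)` as a group of permutations of the projective line. -/
def PSigmaLsub : Subgroup (Equiv.Perm (PG1 F)) :=
  Subgroup.closure {e | ∃ (σ : F ≃+* F) (s : Matrix.SpecialLinearGroup (Fin 2) F),
    e = projSemilinear F σ (Matrix.SpecialLinearGroup.toGL s)}

/-- `PΓL(2,F)` as a group of permutations of the projective line. -/
def PGammaLsub : Subgroup (Equiv.Perm (PG1 F)) :=
  Subgroup.closure {e | ∃ (σ : F ≃+* F) (g : GL (Fin 2) F), e = projSemilinear F σ g}

/-- The canonical subline of `PG(1,F)` determined by a subfield `K` of `F`: the set of points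
admitting homogeneous coordinates in `K`. -/
def canonicalSubline (K : Subfield F) : Set (PG1 F) :=
  {p | ∃ (v : Fin 2 → F) (hv : v ≠ 0), (∀ i, v i ∈ K) ∧ p = Projectivization.mk F v hv}

/-- A subset of `PG(1,F)` is a (`K`-)Baer subline if it is the image of the canonical subline
over `K` under an element of `PGL(2,F)`. -/
def IsBaerSubline (K : Subfield F) (s : Set (PG1 F)) : Prop :=
  ∃ g : GL (Fin 2) F, s = (projSemilinear F (RingEquiv.refl F) g) '' canonicalSubline F K

end FT
end

namespace FT

/-- `IsDesign 𝓑 k lam` says that the family `𝓑` of subsets of the point set `Pt` is the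
block set of a `2-(v, k, lam)` design. -/
structure IsDesign {Pt : Type*} (𝓑 : Set (Set Pt)) (k lam : ℕ) : Prop where
  block_card : ∀ B ∈ 𝓑, Nat.card B = k
  pair_count : ∀ x y : Pt, x ≠ y → Nat.card {B : Set Pt | B ∈ 𝓑 ∧ x ∈ B ∧ y ∈ B} = lam

/-- The group `G` is transitive on the flags (incident point-block pairs) of the design. -/
def FlagTransitive {Pt : Type*} (G : Type*) [Group G] [MulAction G Pt]
    (𝓑 : Set (Set Pt)) : Prop :=
  ∀ B ∈ 𝓑, ∀ C ∈ 𝓑, ∀ x ∈ B, ∀ y ∈ C, ∃ g : G, g • B = C ∧ g • x = y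

end FT

open FT

namespace FT

open MulAction Matrix.GeneralLinearGroup

section Orbits

variable {G X : Type*} [Group G] [MulAction G X] {H : Subgroup G} {b : X} {g : G}

lemma stabilizer_smul_le [H.Normal] (hb : stabilizer G b ≤ H) (g : G) :
    stabilizer G (g • b) ≤ H := by
  intro h hh
  have hconj : g⁻¹ * h * g⁻¹⁻¹ ∈ stabilizer G b := by
    rw [inv_inv, mem_stabilizer_iff, mul_smul, mul_smul, mem_stabilizer_iff.1 hh, inv_smul_smul]
  simpa [mul_assoc] using ‹H.Normal›.conj_mem _ (hb hconj) g

lemma smul_mem_orbit_smul_iff (hH : H.index = 2) (hb : stabilizer G b ≤ H) {h : G} :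
    g • b ∈ orbit H (h • b) ↔ (g ∈ H ↔ h ∈ H) := by
  constructor
  · rintro ⟨u, hu⟩
    have hmem : g⁻¹ * u * h ∈ H := hb <| by
      rw [mem_stabilizer_iff, mul_smul, mul_smul, inv_smul_eq_iff]
      exact hu
    simpa [Subgroup.mul_mem_iff_of_index_two hH] using hmem
  · intro hgh
    refine ⟨⟨g * h⁻¹, ?_⟩, ?_⟩
    · simpa [Subgroup.mul_mem_iff_of_index_two hH] using hgh
    · simp [Subgroup.smul_def, mul_smul]

lemma smul_mem_orbit_iff (hH : H.index = 2) (hb : stabilizer G b ≤ H) :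
    g • b ∈ orbit H b ↔ g ∈ H := by
  simpa using smul_mem_orbit_smul_iff hH hb (g := g) (h := 1)

lemma disjoint_orbit_orbit_smul (hH : H.index = 2) (hb : stabilizer G b ≤ H) (hg : g ∉ H) :
    Disjoint (orbit H b) (orbit H (g • b)) :=
  (orbit.eq_or_disjoint b (g • b)).resolve_left fun h =>
    hg ((smul_mem_orbit_iff hH hb).1 (orbit_eq_iff.1 h.symm))

lemma orbit_union_orbit_smul (hH : H.index = 2) (hg : g ∉ H) :
    orbit H b ∪ orbit H (g • b) = orbit G b := by
  refine Set.Subset.antisymm (Set.union_subset (orbit_subgroup_subset H b) ?_) ?_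
  · exact (orbit_subgroup_subset H _).trans (orbit_smul g b).subset
  · rintro _ ⟨u, rfl⟩
    by_cases hu : u ∈ H
    · exact Or.inl ⟨⟨u, hu⟩, rfl⟩
    · refine Or.inr ⟨⟨u * g⁻¹, ?_⟩, ?_⟩
      · simp [Subgroup.mul_mem_iff_of_index_two hH, hu, hg]
      · simp [Subgroup.smul_def, mul_smul]

lemma card_orbit_smul [H.Normal] (g : G) (b : X) :
    Nat.card (orbit H (g • b)) = Nat.card (orbit H b) := by
  rw [← smul_orbit_eq_orbit_smul]
  exact Set.ncard_smul_set g _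

lemma orbit_map_toPermHom (H : Subgroup G) (s : Set X) :
    orbit (H.map (toPermHom G X)) s = orbit H s := by
  ext t
  constructor
  · rintro ⟨⟨_, h, hh, rfl⟩, rfl⟩
    exact ⟨⟨h, hh⟩, rfl⟩
  · rintro ⟨h, rfl⟩
    exact ⟨⟨_, h, h.2, rfl⟩, rfl⟩

lemma card_range_smul {A : Type*} [Group A] (f : A →* G) (x : X) :
    Nat.card (Set.range fun a => f a • x) = ((stabilizer G x).comap f).index := by
  let _ := compHom X f
  exact (index_stabilizer A x).symm

end Orbits

section Designs

variable {G Pt : Type*} [Group G] [MulAction G Pt] {B : Set Pt} {k lam : ℕ}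

lemma isDesign_orbit [IsMultiplyPretransitive G Pt 2] {x₀ y₀ : Pt} (hne : x₀ ≠ y₀)
    (hk : Nat.card B = k)
    (hlam : Nat.card {C | C ∈ orbit G B ∧ x₀ ∈ C ∧ y₀ ∈ C} = lam) :
    IsDesign (orbit G B) k lam where
  block_card := by
    rintro _ ⟨g, rfl⟩
    exact (Set.ncard_smul_set g B).trans hk
  pair_count x y hxy := by
    obtain ⟨g, rfl, rfl⟩ := is_two_pretransitive_iff.1 ‹_› hne hxy
    have hsmul : {C | C ∈ orbit G B ∧ g • x₀ ∈ C ∧ g • y₀ ∈ C} =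
        g • {C | C ∈ orbit G B ∧ x₀ ∈ C ∧ y₀ ∈ C} := by
      ext C
      simp only [Set.mem_smul_set_iff_inv_smul_mem, Set.mem_ofPred_eq, inv_inv, ← orbit_eq_iff,
        orbit_smul]
    rw [hsmul, ← hlam]
    exact Set.ncard_smul_set g _

lemma IsDesign.orbit_subgroup [Finite Pt] {H : Subgroup G}
    (h𝓑 : IsDesign (orbit G B) k (2 * lam)) (hH : H.index = 2) (hB : stabilizer G B ≤ H)
    (hfix : ∀ x y : Pt, x ≠ y → ∃ t ∉ H, t • x = x ∧ t • y = y) :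
    IsDesign (orbit H B) k lam where
  block_card C hC := h𝓑.block_card C (orbit_subgroup_subset H B hC)
  pair_count x y hxy := by
    obtain ⟨t, htH, htx, hty⟩ := hfix x y hxy
    have := Subgroup.normal_of_index_eq_two hH
    let S : Set (Set Pt) := {C | C ∈ orbit H B ∧ x ∈ C ∧ y ∈ C}
    have hmem {z : Pt} (hz : t • z = z) (C : Set Pt) : z ∈ t⁻¹ • C ↔ z ∈ C := by
      rw [Set.mem_smul_set_iff_inv_smul_mem, inv_inv, hz]
    have hsmul : t • S = {C | C ∈ orbit H (t • B) ∧ x ∈ C ∧ y ∈ C} := by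
      ext C
      rw [Set.mem_smul_set_iff_inv_smul_mem, ← smul_orbit_eq_orbit_smul]
      simp only [S, Set.mem_ofPred_eq, Set.mem_smul_set_iff_inv_smul_mem, hmem htx, hmem hty]
    have hdisj : Disjoint S (t • S) := by
      rw [hsmul]
      exact (disjoint_orbit_orbit_smul hH hB htH).mono (fun C hC => hC.1) fun C hC => hC.1
    have hunion : S ∪ t • S = {C | C ∈ orbit G B ∧ x ∈ C ∧ y ∈ C} := by
      rw [hsmul, ← orbit_union_orbit_smul hH htH]
      ext C
      simp only [S, Set.mem_union, Set.mem_ofPred_eq, or_and_right]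
    have hcard : S.ncard + S.ncard = 2 * lam := by
      rw [← h𝓑.pair_count x y hxy, ← hunion, Nat.card_coe_set_eq, Set.ncard_union_eq hdisj,
        Set.ncard_smul_set]
    change S.ncard = lam
    lia

lemma flagTransitive_orbit (hB : ∀ x ∈ B, ∀ y ∈ B, ∃ g : G, g • B = B ∧ g • x = y) :
    FlagTransitive G (orbit G B) := by
  rintro _ ⟨u, rfl⟩ _ ⟨v, rfl⟩ _ ⟨x, hx, rfl⟩ _ ⟨y, hy, rfl⟩
  obtain ⟨g, hgB, hgx⟩ := hB x hx y hy
  exact ⟨v * g * u⁻¹, by simp [mul_smul, hgB], by simp [mul_smul, hgx]⟩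

lemma FlagTransitive.orbit_subgroup {H : Subgroup G} (h𝓑 : FlagTransitive G (orbit G B))
    (hB : stabilizer G B ≤ H) : FlagTransitive H (orbit H B) := by
  rintro _ ⟨u, rfl⟩ _ ⟨v, rfl⟩ x hx y hy
  obtain ⟨g, hgB, hgx⟩ := h𝓑 _ ⟨u, rfl⟩ _ ⟨v, rfl⟩ x hx y hy
  have hmem : (v : G)⁻¹ * g * u ∈ H := hB <| by
    rw [mem_stabilizer_iff, mul_smul, mul_smul, inv_smul_eq_iff]
    exact hgB
  refine ⟨⟨g, ?_⟩, hgB, hgx⟩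
  simpa [Subgroup.mul_mem_cancel_right, Subgroup.mul_mem_cancel_left] using hmem

lemma FlagTransitive.of_map_toPermHom_le {H : Subgroup G} {𝓑 : Set (Set Pt)}
    (h𝓑 : FlagTransitive H 𝓑) {G' : Subgroup (Equiv.Perm Pt)}
    (hG' : H.map (toPermHom G Pt) ≤ G') : FlagTransitive G' 𝓑 := by
  intro B hB C hC x hx y hy
  obtain ⟨h, hhB, hhx⟩ := h𝓑 B hB C hC x hx y hy
  exact ⟨⟨toPermHom G Pt h, hG' ⟨h, h.2, rfl⟩⟩, hhB, hhx⟩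

end Designs

section Squares

lemma index_square_of_even_card {C : Type*} [CommGroup C] [IsCyclic C] [Finite C]
    (hC : Even (Nat.card C)) :
    (Subgroup.square C).index = 2 := by
  have hrange : Subgroup.square C = (powMonoidHom 2 : C →* C).range := by
    ext x
    simp only [Subgroup.mem_square, isSquare_iff_exists_sq, MonoidHom.mem_range,
      powMonoidHom_apply, eq_comm]
  rw [hrange, IsCyclic.index_powMonoidHom_range, Nat.gcd_eq_right hC.two_dvd]

lemma le_square_of_even_index {C : Type*} [CommGroup C] [IsCyclic C] {N : Subgroup C}
    (hN : Even N.index) : N ≤ Subgroup.square C := by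
  intro x hx
  obtain ⟨γ, hγ⟩ := IsCyclic.exists_generator (α := C)
  obtain ⟨n, rfl⟩ := hγ x
  have horder : orderOf (γ : C ⧸ N) = N.index :=
    orderOf_eq_card_of_forall_mem_zpowers fun y => by
      obtain ⟨y, rfl⟩ := QuotientGroup.mk_surjective y
      obtain ⟨m, rfl⟩ := hγ y
      exact ⟨m, rfl⟩
  have hdvd : (N.index : ℤ) ∣ n := by
    rw [← horder, orderOf_dvd_iff_zpow_eq_one]
    exact (QuotientGroup.eq_one_iff _).2 hx
  have hn : Even n := even_iff_two_dvd.2 ((Int.natCast_dvd_natCast.2 hN.two_dvd).trans hdvd)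
  exact hn.isSquare_zpow γ

variable {F : Type*} [Field F] {K : Subfield F}

lemma mem_units_toSubmonoid_iff {a : Fˣ} : a ∈ K.toSubmonoid.units ↔ (a : F) ∈ K := by
  simp [Submonoid.mem_units_iff]

lemma index_units_toSubmonoid [Finite F] (hK : Nat.card K ^ 2 = Nat.card F) :
    K.toSubmonoid.units.index = Nat.card K + 1 := by
  have hcard : Nat.card K.toSubmonoid.units = Nat.card K - 1 :=
    (Nat.card_congr K.toSubmonoid.unitsEquivUnitsType.toEquiv).trans (Nat.card_units K)
  have hpos : 0 < Nat.card K - 1 := Nat.sub_pos_of_lt Finite.one_lt_card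
  refine Nat.eq_of_mul_eq_mul_left hpos ?_
  rw [← hcard, Subgroup.card_mul_index, Nat.card_units, hcard, ← hK, mul_comm]
  exact Nat.sq_sub_sq (Nat.card K) 1

lemma isSquare_of_mem [Finite F] (hF : Odd (Nat.card F)) (hK : Nat.card K ^ 2 = Nat.card F)
    {x : F} (hx : x ∈ K) : IsSquare x := by
  obtain rfl | hx0 := eq_or_ne x 0
  · exact IsSquare.zero
  · have hKodd : Odd (Nat.card K) := by rwa [← hK, Nat.odd_pow_iff two_ne_zero] at hF
    have hle : K.toSubmonoid.units ≤ Subgroup.square Fˣ :=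
      le_square_of_even_index (by rw [index_units_toSubmonoid hK]; exact hKodd.add_one)
    have hsq : IsSquare (Units.mk0 x hx0) := hle (mem_units_toSubmonoid_iff.2 hx)
    exact hsq.map (Units.coeHom F)

/-- The matrices of square determinant: the preimage in `GL(2,F)` of `PSL(2,F)`. -/
def squareDet (F : Type*) [Field F] : Subgroup (GL (Fin 2) F) :=
  (Subgroup.square Fˣ).comap det

lemma mem_squareDet_iff {g : GL (Fin 2) F} :
    g ∈ squareDet F ↔ IsSquare (g : Matrix (Fin 2) (Fin 2) F).det := by
  refine ⟨fun h => h.map (Units.coeHom F), fun ⟨r, hr⟩ => ?_⟩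
  have hr0 : r ≠ 0 := fun h => g.det_ne_zero (by simp [hr, h])
  exact ⟨Units.mk0 r hr0, Units.ext hr⟩

instance : (squareDet F).Normal := Subgroup.Normal.comap inferInstance det

lemma index_squareDet [Finite F] (hF : Odd (Nat.card F)) : (squareDet F).index = 2 := by
  rw [squareDet, Subgroup.index_comap_of_surjective _ det_surjective]
  exact index_square_of_even_card (by rw [Nat.card_units]; exact hF.tsub_odd odd_one)

lemma exists_notMem_squareDet [Finite F] (hF : Odd (Nat.card F)) : ∃ g, g ∉ squareDet F := by
  by_contra! h
  have hindex := index_squareDet hF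
  rw [(Subgroup.eq_top_iff' _).2 h, Subgroup.index_top] at hindex
  exact absurd hindex (by decide)

lemma map_mem_squareDet_iff (σ : F ≃+* F) {g : GL (Fin 2) F} :
    map (σ : F →+* F) g ∈ squareDet F ↔ g ∈ squareDet F := by
  have hdet : (map (σ : F →+* F) g : Matrix (Fin 2) (Fin 2) F).det =
      σ (g : Matrix (Fin 2) (Fin 2) F).det := (RingHom.map_det (σ : F →+* F) _).symm
  rw [mem_squareDet_iff, mem_squareDet_iff, hdet]
  exact ⟨fun h => by simpa using h.map σ.symm, fun h => h.map σ⟩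

lemma ringEquiv_apply_mem [Finite F] (σ : F ≃+* F) {x : F} (hx : x ∈ K) : σ x ∈ K := by
  obtain ⟨p, _⟩ := CharP.exists F
  have : Fact p.Prime := ⟨CharP.char_is_prime F p⟩
  let _ : Algebra (ZMod p) F := ZMod.algebra F p
  let σ' : F ≃ₐ[ZMod p] F := AlgEquiv.ofRingEquiv (f := σ) fun r =>
    DFunLike.congr_fun (Subsingleton.elim
      ((σ : F →+* F).comp (algebraMap (ZMod p) F)) (algebraMap (ZMod p) F)) r
  obtain ⟨n, hn⟩ := (FiniteField.bijective_frobeniusAlgEquivOfAlgebraic_pow (ZMod p) F).2 σ'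
  have hσ : x ^ Fintype.card (ZMod p) ^ n.1 = σ' x := by
    simpa only [AlgEquiv.coe_pow, FiniteField.coe_frobeniusAlgEquivOfAlgebraic_iterate]
      using DFunLike.congr_fun hn x
  change σ' x ∈ K
  exact hσ ▸ K.pow_mem hx _

end Squares

section Semilinear

variable {F : Type} [Field F]

lemma projSemilinear_mul (σ τ : F ≃+* F) (g h : GL (Fin 2) F) :
    projSemilinear F σ g * projSemilinear F τ h =
      projSemilinear F (τ.trans σ) (g * map (σ : F →+* F) h) := by
  ext p
  induction p using Projectivization.ind with | h v hv =>
  simp only [Equiv.Perm.mul_apply, projSemilinear, Equiv.coe_fn_mk, Projectivization.map_mk]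
  congr 1
  have hmap : (fun i => σ ((h : Matrix (Fin 2) (Fin 2) F).mulVec (fun j => τ (v j)) i)) =
      ((h : Matrix (Fin 2) (Fin 2) F).map σ).mulVec (fun j => σ (τ (v j))) :=
    funext fun i => RingHom.map_mulVec (σ : F →+* F) _ _ i
  rw [semilinearAux_apply, semilinearAux_apply, semilinearAux_apply, hmap, Matrix.mulVec_mulVec]
  rfl

lemma projSemilinear_refl (g : GL (Fin 2) F) :
    projSemilinear F (RingEquiv.refl F) g = toPermHom (GL (Fin 2) F) (PG1 F) g := by
  ext p
  induction p using Projectivization.ind with | h v hv => rfl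

lemma projSemilinear_refl_image (g : GL (Fin 2) F) (s : Set (PG1 F)) :
    projSemilinear F (RingEquiv.refl F) g '' s = g • s := by
  rw [projSemilinear_refl]
  rfl

lemma projSemilinear_image_smul (σ : F ≃+* F) (g h : GL (Fin 2) F) (s : Set (PG1 F)) :
    projSemilinear F σ g '' (h • s) = projSemilinear F σ (g * map (σ : F →+* F) h) '' s := by
  rw [← projSemilinear_refl_image, ← Set.image_comp, ← Equiv.Perm.coe_mul, projSemilinear_mul]
  rfl

lemma exists_projSemilinear_eq_of_mem_squareDet (σ : F ≃+* F) {g : GL (Fin 2) F}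
    (hg : g ∈ squareDet F) :
    ∃ s : SpecialLinearGroup (Fin 2) F,
      projSemilinear F σ g = projSemilinear F σ (SpecialLinearGroup.toGL s) := by
  obtain ⟨r, hr⟩ := mem_squareDet_iff.1 hg
  have hr0 : r ≠ 0 := fun h => g.det_ne_zero (by simp [hr, h])
  refine ⟨⟨r⁻¹ • (g : Matrix (Fin 2) (Fin 2) F), ?_⟩, ?_⟩
  · rw [Matrix.det_smul, hr, Fintype.card_fin]
    field_simp
  · ext p
    induction p using Projectivization.ind with | h v hv =>
    refine (Projectivization.mk_eq_mk_iff' F _ _ _ _).2 ⟨r, ?_⟩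
    change r • (r⁻¹ • (g : Matrix (Fin 2) (Fin 2) F)).mulVec (fun i => σ (v i)) =
      (g : Matrix (Fin 2) (Fin 2) F).mulVec (fun i => σ (v i))
    rw [Matrix.smul_mulVec, smul_inv_smul₀ hr0]

lemma PSLsub_eq_map : PSLsub F = (squareDet F).map (toPermHom (GL (Fin 2) F) (PG1 F)) := by
  apply le_antisymm
  · rw [PSLsub, Subgroup.closure_le]
    rintro _ ⟨s, rfl⟩
    refine ⟨SpecialLinearGroup.toGL s, mem_squareDet_iff.2 ?_, (projSemilinear_refl _).symm⟩
    exact s.2 ▸ IsSquare.one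
  · rintro _ ⟨g, hg, rfl⟩
    obtain ⟨s, hs⟩ := exists_projSemilinear_eq_of_mem_squareDet (RingEquiv.refl F) hg
    exact Subgroup.subset_closure ⟨s, by rw [← projSemilinear_refl, hs]⟩

lemma projSemilinear_mem_PSigmaLsub (σ : F ≃+* F) {g : GL (Fin 2) F} (hg : g ∈ squareDet F) :
    projSemilinear F σ g ∈ PSigmaLsub F :=
  let ⟨s, hs⟩ := exists_projSemilinear_eq_of_mem_squareDet σ hg
  Subgroup.subset_closure ⟨σ, s, hs⟩

lemma exists_eq_projSemilinear_of_mem_PGammaLsub {e : Equiv.Perm (PG1 F)}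
    (he : e ∈ PGammaLsub F) :
    ∃ (σ : F ≃+* F) (g : GL (Fin 2) F), e = projSemilinear F σ g := by
  rw [PGammaLsub] at he
  induction he using Subgroup.closure_induction with
  | mem _ hx => exact hx
  | one => exact ⟨RingEquiv.refl F, 1, by rw [projSemilinear_refl, map_one]⟩
  | mul x y _ _ hx hy =>
    obtain ⟨σ, g, rfl⟩ := hx
    obtain ⟨τ, h, rfl⟩ := hy
    exact ⟨_, _, projSemilinear_mul σ τ g h⟩
  | inv x _ hx =>
    obtain ⟨σ, g, rfl⟩ := hx
    exact ⟨σ.symm, map (σ.symm : F →+* F) g⁻¹, Equiv.ext fun _ => rfl⟩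

end Semilinear

section Subline

variable {F : Type} [Field F] {K : Subfield F}

lemma isBaerSubline_iff_mem_orbit {B : Set (PG1 F)} :
    IsBaerSubline F K B ↔ B ∈ orbit (GL (Fin 2) F) (canonicalSubline F K) := by
  simp only [IsBaerSubline, projSemilinear_refl_image, mem_orbit_iff, eq_comm]

/-- Extension of scalars `PG(1,K) → PG(1,F)`; it identifies `PG(1,K)` with the canonical
subline. -/
def extendScalars (K : Subfield F) : PG1 K → PG1 F :=
  Projectivization.map (σ := K.subtype)
    { toFun := fun v i => v i
      map_add' := fun _ _ => rfl
      map_smul' := fun _ _ => rfl }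
    fun _ _ h => funext fun i => Subtype.ext (congrFun h i)

lemma range_extendScalars : Set.range (extendScalars K) = canonicalSubline F K := by
  ext p
  constructor
  · rintro ⟨x, rfl⟩
    induction x using Projectivization.ind with | h v hv =>
    exact ⟨fun i => v i, fun h => hv (funext fun i => Subtype.ext (congrFun h i)),
      fun i => (v i).2, rfl⟩
  · rintro ⟨v, hv, hvK, rfl⟩
    exact ⟨mk K (fun i => ⟨v i, hvK i⟩)
      fun h => hv (funext fun i => congrArg Subtype.val (congrFun h i)), rfl⟩

lemma extendScalars_injective : Function.Injective (extendScalars K) := by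
  intro x y hxy
  induction x using Projectivization.ind with | h u hu =>
  induction y using Projectivization.ind with | h v hv =>
  obtain ⟨a, ha⟩ := (mk_eq_mk_iff' F _ _ _ _).1 hxy
  obtain ⟨i, hi⟩ := Function.ne_iff.1 hv
  have hai : ∀ j, a * v j = u j := fun j => congrFun ha j
  have haK : a = (u i / v i : K) := by
    rw [Subfield.coe_div, eq_div_iff (by simpa using hi), hai]
  refine (mk_eq_mk_iff' K _ _ _ _).2 ⟨u i / v i, funext fun j => Subtype.ext ?_⟩
  simp [← haK, hai]

lemma map_smul_extendScalars (m : GL (Fin 2) K) (x : PG1 K) :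
    map K.subtype m • extendScalars K x = extendScalars K (m • x) := by
  induction x using Projectivization.ind with | h v hv =>
  simp only [extendScalars, smul_mk]
  congr 1

lemma map_smul_canonicalSubline (m : GL (Fin 2) K) :
    map K.subtype m • canonicalSubline F K = canonicalSubline F K := by
  rw [← range_extendScalars, Set.smul_set_range]
  simp only [map_smul_extendScalars]
  exact (MulAction.toPerm m).surjective.range_comp (extendScalars K)

lemma card_canonicalSubline [Finite K] : Nat.card (canonicalSubline F K) = Nat.card K + 1 := by
  rw [← range_extendScalars, Nat.card_range_of_injective extendScalars_injective]
  exact card_of_finrank_two K _ (Module.finrank_fin_fun K)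

instance {ι E : Type*} [Fintype ι] [DecidableEq ι] [Field E] :
    IsMultiplyPretransitive (GL ι E) (Projectivization E (ι → E)) 2 := by
  refine is_two_pretransitive_iff.2 fun hab hcd => ?_
  obtain ⟨s, hs⟩ := is_two_pretransitive_iff.1
    (inferInstance : IsMultiplyPretransitive (SpecialLinearGroup ι E)
      (Projectivization E (ι → E)) 2) hab hcd
  exact ⟨SpecialLinearGroup.toGL s, hs⟩

lemma exists_smul_canonicalSubline_eq_self {x y x' y' : PG1 F} (hx : x ∈ canonicalSubline F K)
    (hy : y ∈ canonicalSubline F K) (hx' : x' ∈ canonicalSubline F K)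
    (hy' : y' ∈ canonicalSubline F K) (hxy : x ≠ y) (hxy' : x' ≠ y') :
    ∃ g : GL (Fin 2) F, g • canonicalSubline F K = canonicalSubline F K ∧
      g • x = x' ∧ g • y = y' := by
  rw [← range_extendScalars] at hx hy hx' hy'
  obtain ⟨x, rfl⟩ := hx
  obtain ⟨y, rfl⟩ := hy
  obtain ⟨x', rfl⟩ := hx'
  obtain ⟨y', rfl⟩ := hy'
  obtain ⟨m, rfl, rfl⟩ := is_two_pretransitive_iff.1
    (inferInstance : IsMultiplyPretransitive (GL (Fin 2) K) (PG1 K) 2)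
    (ne_of_apply_ne _ hxy) (ne_of_apply_ne _ hxy')
  exact ⟨map K.subtype m, map_smul_canonicalSubline m, map_smul_extendScalars m x,
    map_smul_extendScalars m y⟩

lemma flagTransitive_GL_orbit_canonicalSubline :
    FlagTransitive (GL (Fin 2) F) (orbit (GL (Fin 2) F) (canonicalSubline F K)) := by
  refine flagTransitive_orbit fun x hx y hy => ?_
  rw [← range_extendScalars] at hx hy
  obtain ⟨x, rfl⟩ := hx
  obtain ⟨y, rfl⟩ := hy
  have : IsPretransitive (GL (Fin 2) K) (PG1 K) := isPretransitive_of_is_two_pretransitive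
  obtain ⟨m, rfl⟩ := exists_smul_eq (GL (Fin 2) K) x y
  exact ⟨map K.subtype m, map_smul_canonicalSubline m, map_smul_extendScalars m x⟩

lemma exists_mul_add_mul_eq_mul_of_smul_canonicalSubline {g : GL (Fin 2) F}
    (hg : g • canonicalSubline F K = canonicalSubline F K) {u : Fin 2 → K} (hu : u ≠ 0) :
    ∃ (a : F) (w : Fin 2 → K), ∀ i, g i 0 * u 0 + g i 1 * u 1 = a * w i := by
  have hmem : g • extendScalars K (mk K u hu) ∈ Set.range (extendScalars K) := by
    rw [range_extendScalars, ← hg, Set.smul_mem_smul_set_iff, ← range_extendScalars]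
    exact Set.mem_range_self _
  obtain ⟨x, hx⟩ := hmem
  induction x using Projectivization.ind with | h w hw =>
  obtain ⟨a, ha⟩ := (mk_eq_mk_iff' F _ _ _ _).1 hx.symm
  refine ⟨a, w, fun i => (?_ : _ = _).trans (congrFun ha i).symm⟩
  exact (Fin.sum_univ_two fun j => g i j * (u j : F)).symm

/-- The columns of `g` are `a u` and `b v` and their sum is `c w`, with `u`, `v` and `w` over `K`;
by Cramer's rule `a` and `b` are `K`-multiples of `c`. -/
lemma exists_eq_smul_map_of_smul_canonicalSubline {g : GL (Fin 2) F}
    (hg : g • canonicalSubline F K = canonicalSubline F K) :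
    ∃ (c : F) (m : Matrix (Fin 2) (Fin 2) K),
      (g : Matrix (Fin 2) (Fin 2) F) = c • m.map K.subtype := by
  obtain ⟨a, u, hu⟩ : ∃ (a : F) (u : Fin 2 → K), ∀ i, g i 0 = a * u i := by
    simpa using exists_mul_add_mul_eq_mul_of_smul_canonicalSubline hg (u := ![1, 0]) (by simp)
  obtain ⟨b, v, hv⟩ : ∃ (b : F) (v : Fin 2 → K), ∀ i, g i 1 = b * v i := by
    simpa using exists_mul_add_mul_eq_mul_of_smul_canonicalSubline hg (u := ![0, 1]) (by simp)
  obtain ⟨c, w, hw⟩ : ∃ (c : F) (w : Fin 2 → K), ∀ i, g i 0 + g i 1 = c * w i := by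
    simpa using exists_mul_add_mul_eq_mul_of_smul_canonicalSubline hg (u := ![1, 1]) (by simp)
  have hD : (u 0 * v 1 - u 1 * v 0 : F) ≠ 0 := by
    intro h
    apply g.det_ne_zero
    rw [Matrix.det_fin_two, hu, hu, hv, hv]
    linear_combination a * b * h
  have ha : a = c * ((w 0 * v 1 - w 1 * v 0) / (u 0 * v 1 - u 1 * v 0)) := by
    rw [← mul_div_assoc, eq_div_iff hD]
    linear_combination v 1 * (hw 0 - hu 0 - hv 0) - v 0 * (hw 1 - hu 1 - hv 1)
  have hb : b = c * ((u 0 * w 1 - u 1 * w 0) / (u 0 * v 1 - u 1 * v 0)) := by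
    rw [← mul_div_assoc, eq_div_iff hD]
    linear_combination u 0 * (hw 1 - hu 1 - hv 1) - u 1 * (hw 0 - hu 0 - hv 0)
  refine ⟨c, Matrix.of fun i => ![(w 0 * v 1 - w 1 * v 0) / (u 0 * v 1 - u 1 * v 0) * u i,
    (u 0 * w 1 - u 1 * w 0) / (u 0 * v 1 - u 1 * v 0) * v i], ?_⟩
  ext i j
  fin_cases j
  · simp [hu, ha, mul_assoc]
  · simp [hv, hb, mul_assoc]

lemma stabilizer_canonicalSubline_le_squareDet (hsq : ∀ x ∈ K, IsSquare x) :
    stabilizer (GL (Fin 2) F) (canonicalSubline F K) ≤ squareDet F := by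
  intro g hg
  obtain ⟨c, m, hm⟩ := exists_eq_smul_map_of_smul_canonicalSubline hg
  have hdet : (m.map K.subtype).det = m.det := (RingHom.map_det K.subtype m).symm
  rw [mem_squareDet_iff, hm, Matrix.det_smul, Fintype.card_fin, hdet]
  exact (IsSquare.sq c).mul (hsq _ m.det.2)

lemma projSemilinear_image_canonicalSubline [Finite F] (σ : F ≃+* F) (g : GL (Fin 2) F) :
    projSemilinear F σ g '' canonicalSubline F K = g • canonicalSubline F K := by
  refine Set.eq_of_subset_of_ncard_le ?_ ?_ (Set.toFinite _)
  · rintro _ ⟨_, ⟨v, hv, hvK, rfl⟩, rfl⟩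
    refine ⟨mk F (fun i => σ (v i)) ?_, ⟨_, _, fun i => ringEquiv_apply_mem σ (hvK i), rfl⟩, rfl⟩
    exact fun h => hv (funext fun i => σ.injective ((congrFun h i).trans (map_zero σ).symm))
  · rw [Set.ncard_smul_set, Set.ncard_image_of_injective _ (Equiv.injective _)]

end Subline

section Pencil

variable {F : Type} [Field F] {K : Subfield F}

/-- The diagonal matrices `diag(a, 1)`; modulo scalars they form the pointwise stabilizer of the
points `[1 : 0]` and `[0 : 1]`. -/
def diagGL {E : Type*} [Field E] : Eˣ →* GL (Fin 2) E where
  toFun a := ⟨!![(a : E), 0; 0, 1], !![((a⁻¹ : Eˣ) : E), 0; 0, 1],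
    by simp [Matrix.one_fin_two], by simp [Matrix.one_fin_two]⟩
  map_one' := by ext i j; fin_cases i <;> fin_cases j <;> rfl
  map_mul' a b := by ext i j; fin_cases i <;> fin_cases j <;> simp

lemma det_diagGL (a : Fˣ) : det (diagGL a) = a := by
  ext
  simp [diagGL]

lemma comap_diagGL_stabilizer_canonicalSubline :
    (stabilizer (GL (Fin 2) F) (canonicalSubline F K)).comap diagGL = K.toSubmonoid.units := by
  ext a
  rw [Subgroup.mem_comap, mem_units_toSubmonoid_iff]
  constructor
  · intro ha
    obtain ⟨c, m, hm⟩ := exists_eq_smul_map_of_smul_canonicalSubline ha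
    have h0 : (a : F) = c * m 0 0 := congrFun (congrFun hm 0) 0
    have h1 : (1 : F) = c * m 1 1 := congrFun (congrFun hm 1) 1
    have ha' : (a : F) = m 0 0 / m 1 1 := by
      rw [eq_div_iff (right_ne_zero_of_mul (h1 ▸ one_ne_zero))]
      linear_combination m 1 1 * h0 - m 0 0 * h1
    exact ha' ▸ K.div_mem (m 0 0).2 (m 1 1).2
  · intro ha
    have hmap : diagGL a = map K.subtype
        (diagGL (Units.mk0 (⟨a, ha⟩ : K) fun h => a.ne_zero (congrArg Subtype.val h))) := by
      ext i j
      fin_cases i <;> fin_cases j <;> simp [diagGL]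
    rw [mem_stabilizer_iff, hmap, map_smul_canonicalSubline]

/-- The point `[1 : 0]` of the projective line. -/
def pointInfty (F : Type) [Field F] : PG1 F := mk F ![1, 0] (by simp)

/-- The point `[0 : 1]` of the projective line. -/
def pointZero (F : Type) [Field F] : PG1 F := mk F ![0, 1] (by simp)

lemma pointInfty_ne_pointZero : pointInfty F ≠ pointZero F := by
  intro h
  obtain ⟨a, ha⟩ := (mk_eq_mk_iff' F _ _ _ _).1 h
  simpa using congrFun ha 0

lemma pointInfty_mem_canonicalSubline : pointInfty F ∈ canonicalSubline F K :=
  ⟨_, _, Fin.forall_fin_two.2 ⟨K.one_mem, K.zero_mem⟩, rfl⟩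

lemma pointZero_mem_canonicalSubline : pointZero F ∈ canonicalSubline F K :=
  ⟨_, _, Fin.forall_fin_two.2 ⟨K.zero_mem, K.one_mem⟩, rfl⟩

lemma diagGL_smul_pointInfty (a : Fˣ) : diagGL a • pointInfty F = pointInfty F := by
  refine (mk_eq_mk_iff' F _ _ _ _).2 ⟨a, ?_⟩
  ext i
  fin_cases i <;> simp [diagGL]

lemma diagGL_smul_pointZero (a : Fˣ) : diagGL a • pointZero F = pointZero F := by
  refine (mk_eq_mk_iff' F _ _ _ _).2 ⟨1, ?_⟩
  ext i
  fin_cases i <;> simp [diagGL]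

lemma exists_smul_eq_diagGL_smul {g : GL (Fin 2) F} (hinf : g • pointInfty F = pointInfty F)
    (h0 : g • pointZero F = pointZero F) : ∃ a : Fˣ, ∀ p : PG1 F, g • p = diagGL a • p := by
  have h10 : g 1 0 = 0 := by
    obtain ⟨a, ha⟩ := (mk_eq_mk_iff' F _ _ _ _).1 hinf
    simpa [eq_comm] using congrFun ha 1
  have h01 : g 0 1 = 0 := by
    obtain ⟨a, ha⟩ := (mk_eq_mk_iff' F _ _ _ _).1 h0
    simpa [eq_comm] using congrFun ha 0
  have hdet := g.det_ne_zero
  rw [Matrix.det_fin_two, h10, mul_zero, sub_zero] at hdet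
  obtain ⟨h00, h11⟩ := mul_ne_zero_iff.1 hdet
  refine ⟨Units.mk0 (g 0 0 / g 1 1) (div_ne_zero h00 h11), fun p => ?_⟩
  induction p using Projectivization.ind with | h v hv =>
  refine (mk_eq_mk_iff' F _ _ _ _).2 ⟨g 1 1, ?_⟩
  ext i
  fin_cases i
  · simp [diagGL, h01, mul_div_cancel₀ _ h11, ← mul_assoc, Matrix.vecHead]
  · simp [diagGL, h10, Matrix.vecHead, Matrix.vecTail]

lemma setOf_mem_orbit_canonicalSubline_eq_range :
    {C | C ∈ orbit (GL (Fin 2) F) (canonicalSubline F K) ∧ pointInfty F ∈ C ∧ pointZero F ∈ C} =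
      Set.range fun a : Fˣ => diagGL a • canonicalSubline F K := by
  ext C
  constructor
  · rintro ⟨⟨g, rfl⟩, hinf, h0⟩
    rw [Set.mem_smul_set_iff_inv_smul_mem] at hinf h0
    obtain ⟨m, hm, hminf, hm0⟩ := exists_smul_canonicalSubline_eq_self
      pointInfty_mem_canonicalSubline pointZero_mem_canonicalSubline hinf h0
      pointInfty_ne_pointZero ((MulAction.injective g⁻¹).ne pointInfty_ne_pointZero)
    obtain ⟨a, ha⟩ := exists_smul_eq_diagGL_smul (g := g * m)
      (by rw [mul_smul, hminf, smul_inv_smul]) (by rw [mul_smul, hm0, smul_inv_smul])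
    refine ⟨a, ?_⟩
    calc diagGL a • canonicalSubline F K = (g * m) • canonicalSubline F K :=
          (Set.image_congr' ha).symm
      _ = g • canonicalSubline F K := by rw [mul_smul, hm]
  · rintro ⟨a, rfl⟩
    refine ⟨⟨_, rfl⟩, ?_, ?_⟩
    · exact diagGL_smul_pointInfty a ▸ Set.smul_mem_smul_set pointInfty_mem_canonicalSubline
    · exact diagGL_smul_pointZero a ▸ Set.smul_mem_smul_set pointZero_mem_canonicalSubline

lemma isDesign_GL_orbit_canonicalSubline [Finite F] (hK : Nat.card K ^ 2 = Nat.card F) :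
    IsDesign (orbit (GL (Fin 2) F) (canonicalSubline F K)) (Nat.card K + 1) (Nat.card K + 1) := by
  refine isDesign_orbit pointInfty_ne_pointZero card_canonicalSubline ?_
  rw [setOf_mem_orbit_canonicalSubline_eq_range, card_range_smul,
    comap_diagGL_stabilizer_canonicalSubline, index_units_toSubmonoid hK]

lemma exists_notMem_squareDet_smul_eq_self {n : GL (Fin 2) F} (hn : n ∉ squareDet F)
    {x y : PG1 F} (hxy : x ≠ y) : ∃ t ∉ squareDet F, t • x = x ∧ t • y = y := by
  obtain ⟨g, rfl, rfl⟩ := is_two_pretransitive_iff.1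
    (inferInstance : IsMultiplyPretransitive (GL (Fin 2) F) (PG1 F) 2)
    pointInfty_ne_pointZero hxy
  refine ⟨g * diagGL (det n) * g⁻¹, fun h => hn ?_, ?_, ?_⟩
  · have hdet : det (g * diagGL (det n) * g⁻¹) = det n := by
      rw [map_mul, map_mul, map_inv, det_diagGL, mul_inv_cancel_comm]
    rwa [squareDet, Subgroup.mem_comap, hdet] at h
  · rw [mul_smul, mul_smul, inv_smul_smul, diagGL_smul_pointInfty]
  · rw [mul_smul, mul_smul, inv_smul_smul, diagGL_smul_pointZero]

end Pencil

section BaerSubline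

variable {F : Type} [Field F] {K : Subfield F} {B : Set (PG1 F)}

lemma orbit_PSLsub (s : Set (PG1 F)) : orbit (PSLsub F) s = orbit (squareDet F) s := by
  rw [PSLsub_eq_map, orbit_map_toPermHom]

lemma isBaerSubline_canonicalSubline : IsBaerSubline F K (canonicalSubline F K) :=
  isBaerSubline_iff_mem_orbit.2 (mem_orbit_self _)

lemma IsBaerSubline.smul (hB : IsBaerSubline F K B) (g : GL (Fin 2) F) :
    IsBaerSubline F K (g • B) :=
  isBaerSubline_iff_mem_orbit.2 (mem_orbit_of_mem_orbit g (isBaerSubline_iff_mem_orbit.1 hB))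

lemma IsBaerSubline.orbit_eq (hB : IsBaerSubline F K B) :
    orbit (GL (Fin 2) F) B = {s | IsBaerSubline F K s} := by
  rw [orbit_eq_iff.2 (isBaerSubline_iff_mem_orbit.1 hB)]
  exact Set.ext fun _ => isBaerSubline_iff_mem_orbit.symm

variable [Finite F]

lemma IsBaerSubline.stabilizer_le_squareDet (hB : IsBaerSubline F K B)
    (hF : Odd (Nat.card F)) (hK : Nat.card K ^ 2 = Nat.card F) :
    stabilizer (GL (Fin 2) F) B ≤ squareDet F := by
  obtain ⟨g, rfl⟩ := isBaerSubline_iff_mem_orbit.1 hB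
  exact stabilizer_smul_le
    (stabilizer_canonicalSubline_le_squareDet fun _ => isSquare_of_mem hF hK) g

lemma IsBaerSubline.isDesign_orbit (hB : IsBaerSubline F K B)
    (hF : Odd (Nat.card F)) (hK : Nat.card K ^ 2 = Nat.card F) :
    IsDesign (orbit (PSLsub F) B) (Nat.card K + 1) ((Nat.card K + 1) / 2) := by
  have hKodd : Odd (Nat.card K) := by rwa [← hK, Nat.odd_pow_iff two_ne_zero] at hF
  have hdesign := isDesign_GL_orbit_canonicalSubline hK
  rw [← orbit_eq_iff.2 (isBaerSubline_iff_mem_orbit.1 hB)] at hdesign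
  obtain ⟨n, hn⟩ := exists_notMem_squareDet hF
  rw [orbit_PSLsub]
  refine IsDesign.orbit_subgroup ?_ (index_squareDet hF) (hB.stabilizer_le_squareDet hF hK)
    fun _ _ => exists_notMem_squareDet_smul_eq_self hn
  rwa [Nat.two_mul_div_two_of_even hKodd.add_one]

lemma IsBaerSubline.flagTransitive_orbit (hB : IsBaerSubline F K B)
    (hF : Odd (Nat.card F)) (hK : Nat.card K ^ 2 = Nat.card F)
    {G' : Subgroup (Equiv.Perm (PG1 F))} (hG' : PSLsub F ≤ G') :
    FlagTransitive G' (orbit (PSLsub F) B) := by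
  have hflag := flagTransitive_GL_orbit_canonicalSubline (K := K)
  rw [← orbit_eq_iff.2 (isBaerSubline_iff_mem_orbit.1 hB)] at hflag
  rw [orbit_PSLsub]
  rw [PSLsub_eq_map] at hG'
  exact (hflag.orbit_subgroup (hB.stabilizer_le_squareDet hF hK)).of_map_toPermHom_le hG'

lemma projSemilinear_image_smul_canonicalSubline (σ : F ≃+* F) (g h : GL (Fin 2) F) :
    projSemilinear F σ g '' (h • canonicalSubline F K) =
      (g * map (σ : F →+* F) h) • canonicalSubline F K := by
  rw [projSemilinear_image_smul, projSemilinear_image_canonicalSubline]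

lemma IsBaerSubline.image (hB : IsBaerSubline F K B) {e : Equiv.Perm (PG1 F)}
    (he : e ∈ PGammaLsub F) : IsBaerSubline F K (e '' B) := by
  obtain ⟨σ, g, rfl⟩ := exists_eq_projSemilinear_of_mem_PGammaLsub he
  obtain ⟨h, rfl⟩ := isBaerSubline_iff_mem_orbit.1 hB
  rw [projSemilinear_image_smul_canonicalSubline]
  exact isBaerSubline_canonicalSubline.smul _

lemma isBaerSubline_image_iff {e : Equiv.Perm (PG1 F)} (he : e ∈ PGammaLsub F) :
    IsBaerSubline F K (e '' B) ↔ IsBaerSubline F K B := by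
  refine ⟨fun h => ?_, fun h => h.image he⟩
  simpa [← Set.image_comp, ← Equiv.Perm.coe_mul] using h.image (inv_mem he)

lemma mem_orbit_PSLsub_iff_image_mem_orbit (hF : Odd (Nat.card F))
    (hK : Nat.card K ^ 2 = Nat.card F) {n : GL (Fin 2) F} (hn : n ∉ squareDet F)
    {e : Equiv.Perm (PG1 F)} (he : e ∈ PGammaLsub F) (he' : e ∉ PSigmaLsub F) :
    B ∈ orbit (PSLsub F) (canonicalSubline F K) ↔
      e '' B ∈ orbit (PSLsub F) (n • canonicalSubline F K) := by
  have hH := index_squareDet hF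
  have hstab := isBaerSubline_canonicalSubline.stabilizer_le_squareDet hF hK
  rw [orbit_PSLsub, orbit_PSLsub]
  by_cases hB : IsBaerSubline F K B
  · obtain ⟨h, rfl⟩ := isBaerSubline_iff_mem_orbit.1 hB
    obtain ⟨σ, g, rfl⟩ := exists_eq_projSemilinear_of_mem_PGammaLsub he
    have hg : g ∉ squareDet F := fun hg => he' (projSemilinear_mem_PSigmaLsub σ hg)
    rw [projSemilinear_image_smul_canonicalSubline, smul_mem_orbit_smul_iff hH hstab,
      smul_mem_orbit_iff hH hstab, Subgroup.mul_mem_iff_of_index_two hH, map_mem_squareDet_iff]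
    tauto
  · have hbaer {s C : Set (PG1 F)} (hs : IsBaerSubline F K s)
        (hC : C ∈ orbit (squareDet F) s) : IsBaerSubline F K C :=
      hs.orbit_eq.subset (orbit_subgroup_subset _ _ hC)
    refine iff_of_false (fun h => hB (hbaer isBaerSubline_canonicalSubline h)) fun h => hB ?_
    exact (isBaerSubline_image_iff he).1 (hbaer (isBaerSubline_canonicalSubline.smul n) h)

end BaerSubline

end FT

/-- Let `q` be an odd square prime power, realized as the cardinality of a
finite field `F` with a subfield `K` satisfying `|K|² = q`.  Then `PSL(2,q)` partitions the
set of Baer sublines of `PG(1,q)` into exactly two orbits `𝓑₁ = orbit s₁`, `𝓑₂ = orbit s₂`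
of equal size; for `i = 1, 2` the incidence structure `D_i = (PG(1,q), 𝓑_i)` is a
`2-(q+1, √q+1, (√q+1)/2)` design; `D₁` and `D₂` are isomorphic via any element of
`PΓL(2,q) ∖ PΣL(2,q)`; and every group `G` with `PSL(2,q) ⊴ G ≤ PΣL(2,q)` acts
flag-transitively on `D_i`.  In particular, for `q = 25` each `D_i` is a `2-(26,6,3)`
design admitting `PSL(2,25) ⊴ G ≤ PΣL(2,25)` flag-transitively. -/
theorem stmt_3 (q : ℕ) (hodd : Odd q)
    (F : Type) [Field F] [Fintype F] (hF : Fintype.card F = q)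
    (K : Subfield F) (hK : Nat.card K ^ 2 = q) :
    ∃ s₁ s₂ : Set (PG1 F), IsBaerSubline F K s₁ ∧ IsBaerSubline F K s₂ ∧
      -- the two `PSL(2,q)`-orbits are disjoint, …
      MulAction.orbit (PSLsub F) s₁ ∩ MulAction.orbit (PSLsub F) s₂ = ∅ ∧
      -- … together exhaust the Baer sublines, …
      MulAction.orbit (PSLsub F) s₁ ∪ MulAction.orbit (PSLsub F) s₂ =
        {s : Set (PG1 F) | IsBaerSubline F K s} ∧
      -- … and have equal size:
      Nat.card (MulAction.orbit (PSLsub F) s₁) =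
        Nat.card (MulAction.orbit (PSLsub F) s₂) ∧
      -- each orbit is the block set of a `2-(q+1, √q+1, (√q+1)/2)` design:
      IsDesign (MulAction.orbit (PSLsub F) s₁) (Nat.card K + 1) ((Nat.card K + 1) / 2) ∧
      IsDesign (MulAction.orbit (PSLsub F) s₂) (Nat.card K + 1) ((Nat.card K + 1) / 2) ∧
      -- `D₁ ≅ D₂` via any element of `PΓL(2,q) ∖ PΣL(2,q)`:
      (∀ g : Equiv.Perm (PG1 F), g ∈ PGammaLsub F → g ∉ PSigmaLsub F →
        ∀ B : Set (PG1 F), B ∈ MulAction.orbit (PSLsub F) s₁ ↔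
          g '' B ∈ MulAction.orbit (PSLsub F) s₂) ∧
      -- every `PSL(2,q) ⊴ G ≤ PΣL(2,q)` is flag-transitive on `D₁` and `D₂`:
      (∀ G' : Subgroup (Equiv.Perm (PG1 F)), PSLsub F ≤ G' → G' ≤ PSigmaLsub F →
        FlagTransitive G' (MulAction.orbit (PSLsub F) s₁) ∧
        FlagTransitive G' (MulAction.orbit (PSLsub F) s₂)) ∧
      -- in particular, for `q = 25` each `D_i` is a `2-(26,6,3)` design:
      (q = 25 → Nat.card K = 5 ∧ Nat.card (PG1 F) = 26 ∧
        IsDesign (MulAction.orbit (PSLsub F) s₁) 6 3 ∧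
        IsDesign (MulAction.orbit (PSLsub F) s₂) 6 3) := by
  rw [← Nat.card_eq_fintype_card] at hF
  subst hF
  obtain ⟨n, hn⟩ := exists_notMem_squareDet hodd
  have hH := index_squareDet hodd
  have hs₁ : IsBaerSubline F K (canonicalSubline F K) := isBaerSubline_canonicalSubline
  have hs₂ := hs₁.smul n
  have hD₁ := hs₁.isDesign_orbit hodd hK
  have hD₂ := hs₂.isDesign_orbit hodd hK
  refine ⟨canonicalSubline F K, n • canonicalSubline F K, hs₁, hs₂, ?_, ?_, ?_, hD₁, hD₂,
    fun e he he' B => mem_orbit_PSLsub_iff_image_mem_orbit hodd hK hn he he',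
    fun G' hG' _ => ⟨hs₁.flagTransitive_orbit hodd hK hG', hs₂.flagTransitive_orbit hodd hK hG'⟩,
    fun hq => ?_⟩
  · rw [orbit_PSLsub, orbit_PSLsub, ← Set.disjoint_iff_inter_eq_empty]
    exact disjoint_orbit_orbit_smul hH (hs₁.stabilizer_le_squareDet hodd hK) hn
  · rw [orbit_PSLsub, orbit_PSLsub, orbit_union_orbit_smul hH hn, hs₁.orbit_eq]
  · rw [orbit_PSLsub, orbit_PSLsub, card_orbit_smul]
  · have hK5 : Nat.card K = 5 := Nat.pow_left_injective two_ne_zero (hK.trans hq)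
    have hPG : Nat.card (PG1 F) = Nat.card F + 1 :=
      card_of_finrank_two F _ (Module.finrank_fin_fun F)
    rw [hK5] at hD₁ hD₂
    exact ⟨hK5, by rw [hPG, hq], hD₁, hD₂⟩
end

section
/- Let q ≥ 4 be a power of 2. In the transitive action of PSL(2,q) on the right cosets of a dihedral subgroup D_{2(q−1)} of order 2(q−1), the subdegrees are 1, the value q−1 occurring with multiplicity q/2 − 1, and 2(q−1) occurring once. In the transitive action of PSL(2,q) on the right cosets of a dihedral subgroup D_{2(q+1)} of order 2(q+1), the subdegrees are 1 and the value q+1 occurring with multiplicity q/2 − 1. -/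
open Matrix

/-!
Since `F` has characteristic `2`, `PSL(2,q)` is `SL(2,q)`, where an element with square `1` has
centralizer of order `q` and any other one of order at most `q + 1`. Let `H` be dihedral with
rotation subgroup `C` of order `n = q ± 1`. As `q + 1 < 2n`, a nontrivial `c ∈ C` has centralizer
exactly `C`, and its only conjugates in there are `c` and `c⁻¹`, so `c` fixes no coset other than
`H`. All other `H`-orbits on `G/H` therefore have length `n` or `2n`. The fixed cosets of a
reflection `t` form one orbit of its centralizer, so there are `q / 2` of them, and Burnside's
lemma turns this into `q / 2 - 1` orbits of length `n`. Comparing with `|G : H|` leaves one orbit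
of length `2n` if `n = q - 1` and none if `n = q + 1`.
-/

theorem det_smul_one_add_smul {R : Type*} [CommRing R] (A : Matrix (Fin 2) (Fin 2) R) (x y : R) :
    (x • (1 : Matrix (Fin 2) (Fin 2) R) + y • A).det = x ^ 2 + x * y * A.trace + y ^ 2 * A.det := by
  rw [det_fin_two, det_fin_two, trace_fin_two]
  simp only [Matrix.add_apply, Matrix.smul_apply, smul_eq_mul, one_apply_eq, mul_one,
    one_apply_ne zero_ne_one, one_apply_ne one_ne_zero, mul_zero, zero_add]
  ring

theorem trace_smul_one_add_smul {R : Type*} [CommRing R] (A : Matrix (Fin 2) (Fin 2) R) (x y : R) :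
    (x • (1 : Matrix (Fin 2) (Fin 2) R) + y • A).trace = 2 * x + y * A.trace := by
  simp [mul_comm]

theorem mul_self_eq_trace_smul_sub_det_smul_one {R : Type*} [CommRing R]
    (A : Matrix (Fin 2) (Fin 2) R) : A * A = A.trace • A - A.det • 1 := by
  nontriviality R
  have hCH := A.aeval_self_charpoly
  rw [charpoly_fin_two, map_add, map_sub, map_mul, map_pow, Polynomial.aeval_X,
    Polynomial.aeval_C, Polynomial.aeval_C, Algebra.algebraMap_eq_smul_one,
    Algebra.algebraMap_eq_smul_one, smul_one_mul, sq] at hCH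
  linear_combination (norm := module) hCH

variable {K : Type*} [Field K]

theorem injective_smul_one_add_smul {n : Type*} [Fintype n] [DecidableEq n] {A : Matrix n n K}
    (hA : A ∉ Set.range (scalar n)) :
    Function.Injective fun p : K × K => p.1 • (1 : Matrix n n K) + p.2 • A := by
  rintro ⟨x, y⟩ ⟨x', y'⟩ h
  have : Nonempty n := not_isEmpty_iff.1 fun _ => hA ⟨0, Subsingleton.elim _ _⟩
  have h' : (y - y') • A = (x' - x) • 1 := by
    linear_combination (norm := module) h
  obtain rfl : y = y' := by
    by_contra hy
    refine hA ⟨(y - y')⁻¹ * (x' - x), ?_⟩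
    rw [scalar_apply, ← smul_one_eq_diagonal, mul_smul, ← h', inv_smul_smul₀ (sub_ne_zero.2 hy)]
  simpa using h

theorem exists_smul_eq_of_forall_mul_eq_mul {ι : Type*} {a b : ι → K} (ha : a ≠ 0)
    (h : ∀ i j, a i * b j = a j * b i) : ∃ y : K, y • a = b := by
  obtain ⟨i, hi : a i ≠ 0⟩ := Function.ne_iff.1 ha
  refine ⟨b i / a i, funext fun j => ?_⟩
  rw [Pi.smul_apply, smul_eq_mul, div_mul_eq_mul_div, mul_comm, ← h, mul_div_cancel_left₀ _ hi]

theorem exists_eq_smul_one_add_smul_of_commute {A B : Matrix (Fin 2) (Fin 2) K}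
    (hA : A ∉ Set.range (scalar (Fin 2))) (h : Commute B A) :
    ∃ x y : K, x • (1 : Matrix (Fin 2) (Fin 2) K) + y • A = B := by
  let coords (M : Matrix (Fin 2) (Fin 2) K) : Fin 3 → K := ![M 0 1, M 1 0, M 0 0 - M 1 1]
  have hA0 : coords A ≠ 0 := fun h0 => hA ⟨A 0 0, by
    have h01 : A 0 1 = 0 := congrFun h0 0
    have h10 : A 1 0 = 0 := congrFun h0 1
    have h11 : A 0 0 - A 1 1 = 0 := congrFun h0 2
    ext i j
    fin_cases i <;> fin_cases j
    · simp
    · simp [h01]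
    · simp [h10]
    · simpa using sub_eq_zero.1 h11⟩
  have hprop (i j : Fin 3) : coords A i * coords B j = coords A j * coords B i := by
    have hentry := fun i j => congrFun₂ h.eq i j
    simp only [Matrix.mul_apply, Fin.sum_univ_two, Fin.forall_fin_two] at hentry
    obtain ⟨⟨h00, h01⟩, h10, -⟩ := hentry
    fin_cases i <;> fin_cases j <;> simp [coords] <;> grind
  obtain ⟨y, hy⟩ := exists_smul_eq_of_forall_mul_eq_mul hA0 hprop
  have hy01 : y * A 0 1 = B 0 1 := congrFun hy 0
  have hy10 : y * A 1 0 = B 1 0 := congrFun hy 1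
  have hy11 : y * (A 0 0 - A 1 1) = B 0 0 - B 1 1 := congrFun hy 2
  refine ⟨B 0 0 - y * A 0 0, y, ?_⟩
  ext i j
  fin_cases i <;> fin_cases j
  · simp
  · simp [hy01]
  · simp [hy10]
  · simp only [Fin.mk_one, Matrix.add_apply, Matrix.smul_apply, one_apply_eq, smul_eq_mul, mul_one]
    linear_combination -hy11

section SpecialLinear

open Matrix.SpecialLinearGroup (coe_mul coe_one)

theorem specialLinearGroup_coe_inj {n R : Type*} [DecidableEq n] [Fintype n] [CommRing R]
    {A B : SpecialLinearGroup n R} : (A : Matrix n n R) = B ↔ A = B :=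
  Subtype.val_inj

theorem commute_coe_specialLinearGroup {n R : Type*} [DecidableEq n] [Fintype n] [CommRing R]
    {A B : SpecialLinearGroup n R} : Commute (A : Matrix n n R) B ↔ Commute A B := by
  rw [Commute, SemiconjBy, ← coe_mul, ← coe_mul, specialLinearGroup_coe_inj, Commute, SemiconjBy]

/-- The affine conic `x² + τxy + y² = 1`. For a `2 × 2` matrix `A` of determinant `1` and trace `τ`,
its points are the pairs `(x, y)` for which `x + yA` has determinant `1`. -/
def conic (τ : K) : Set (K × K) :=
  {p | p.1 ^ 2 + p.1 * p.2 * τ + p.2 ^ 2 = 1}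

theorem card_centralizer_eq_card_conic {c : SpecialLinearGroup (Fin 2) K}
    (hc : (c : Matrix (Fin 2) (Fin 2) K) ∉ Set.range (scalar (Fin 2))) :
    Nat.card (Subgroup.centralizer {c}) =
      Nat.card (conic (trace (c : Matrix (Fin 2) (Fin 2) K))) := by
  have hdet (x y : K) : det (x • 1 + y • (c : Matrix (Fin 2) (Fin 2) K)) =
      x ^ 2 + x * y * trace (c : Matrix (Fin 2) (Fin 2) K) + y ^ 2 := by
    rw [det_smul_one_add_smul, c.det_coe, mul_one]
  let f (p : conic (trace (c : Matrix (Fin 2) (Fin 2) K))) : Subgroup.centralizer {c} :=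
    ⟨⟨p.1.1 • 1 + p.1.2 • (c : Matrix (Fin 2) (Fin 2) K), (hdet _ _).trans p.2⟩,
      Subgroup.mem_centralizer_singleton_iff.2 <| Commute.eq <| commute_coe_specialLinearGroup.1 <|
        ((Commute.one_left _).smul_left _).add_left ((Commute.refl _).smul_left _)⟩
  refine (Nat.card_congr (Equiv.ofBijective f ⟨fun p p' h => ?_, fun ⟨g, hg⟩ => ?_⟩)).symm
  · exact Subtype.ext <| injective_smul_one_add_smul hc <|
      congrArg (fun g : Subgroup.centralizer {c} => (g.1 : Matrix (Fin 2) (Fin 2) K)) h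
  · have hcomm : Commute (g : Matrix (Fin 2) (Fin 2) K) c :=
      commute_coe_specialLinearGroup.2 (Subgroup.mem_centralizer_singleton_iff.1 hg)
    obtain ⟨x, y, hxy⟩ := exists_eq_smul_one_add_smul_of_commute hc hcomm
    exact ⟨⟨(x, y), (hdet x y).symm.trans (hxy ▸ g.det_coe)⟩, Subtype.ext (Subtype.ext hxy)⟩

theorem sq_eq_one_iff_of_charP_two {R : Type*} [CommRing R] [NoZeroDivisors R] [CharP R 2] {x : R} :
    x ^ 2 = 1 ↔ x = 1 := by
  rw [← one_pow (M := R) 2, CharTwo.sq_inj, one_pow]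

variable [CharP K 2]

theorem card_conic_zero : Nat.card (conic (0 : K)) = Nat.card K := by
  have hline (p : K × K) : p ∈ conic 0 ↔ p.1 = 1 + p.2 := by
    rw [conic, Set.mem_ofPred_eq, mul_zero, add_zero, ← CharTwo.add_sq, sq_eq_one_iff_of_charP_two,
      CharTwo.add_eq_iff_eq_add]
  exact Nat.card_congr
    { toFun p := p.1.2
      invFun y := ⟨(1 + y, y), (hline _).2 rfl⟩
      left_inv p := Subtype.ext (Prod.ext ((hline _).1 p.2).symm rfl)
      right_inv _ := rfl }

-- The conic has the rational point `(1, 0)`; a line through it is determined by its slope.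
theorem card_conic_le [Finite K] {τ : K} (hτ : τ ≠ 0) :
    Nat.card (conic τ) ≤ Nat.card K + 1 := by
  classical
  rw [← Finite.card_option]
  let slope (p : conic τ) : Option K :=
    if p.1.2 = 0 then none else some ((p.1.1 + 1) / p.1.2)
  refine Nat.card_le_card_of_injective slope ?_
  have h2 : (2 : K) = 0 := CharTwo.two_eq_zero
  have hx {x y : K} (hy : y ≠ 0) : x = 1 + (x + 1) / y * y := by
    rw [div_mul_cancel₀ _ hy]
    linear_combination -h2
  have hslope {x y : K} (hp : x ^ 2 + x * y * τ + y ^ 2 = 1) (hy : y ≠ 0) :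
      y * (((x + 1) / y) ^ 2 + (x + 1) / y * τ + 1) = τ := by
    field_simp
    linear_combination hp + (x + 1) * h2
  rintro ⟨⟨x, y⟩, hp⟩ ⟨⟨x', y'⟩, hp'⟩ h
  simp only [slope] at h hp hp'
  rw [Subtype.mk.injEq, Prod.mk.injEq]
  split_ifs at h with hy hy' hy'
  · subst hy hy'
    have hone {x : K} (h : x ^ 2 + x * 0 * τ + 0 ^ 2 = 1) : x = 1 :=
      sq_eq_one_iff_of_charP_two.1 (by linear_combination h)
    exact ⟨(hone hp).trans (hone hp').symm, rfl⟩
  · have hr : (x + 1) / y = (x' + 1) / y' := Option.some.inj h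
    have hyy' : y = y' := by
      refine mul_right_cancel₀ (right_ne_zero_of_mul (hslope hp hy ▸ hτ)) ?_
      rw [hslope hp hy, hr, hslope hp' hy']
    exact ⟨by rw [hx (x := x) hy, hr, hyy', ← hx hy'], hyy'⟩

theorem notMem_range_scalar_of_ne_one {c : SpecialLinearGroup (Fin 2) K} (hc : c ≠ 1) :
    (c : Matrix (Fin 2) (Fin 2) K) ∉ Set.range (scalar (Fin 2)) := by
  rintro ⟨x, hx⟩
  have hdet := congrArg det hx
  rw [c.det_coe, scalar_apply, det_diagonal, Finset.prod_const, Finset.card_fin,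
    sq_eq_one_iff_of_charP_two] at hdet
  subst hdet
  exact hc (specialLinearGroup_coe_inj.1 (by rw [← hx, map_one, coe_one]))

theorem mul_self_eq_one_iff_trace_eq_zero {c : SpecialLinearGroup (Fin 2) K} (hc : c ≠ 1) :
    c * c = 1 ↔ trace (c : Matrix (Fin 2) (Fin 2) K) = 0 := by
  have hc0 : (c : Matrix (Fin 2) (Fin 2) K) ≠ 0 := fun h =>
    notMem_range_scalar_of_ne_one hc ⟨0, by rw [map_zero, h]⟩
  rw [← specialLinearGroup_coe_inj, coe_mul, mul_self_eq_trace_smul_sub_det_smul_one,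
    c.det_coe, one_smul, CharTwo.sub_eq_add, coe_one, add_eq_right,
    smul_eq_zero, or_iff_left hc0]

theorem card_centralizer_of_mul_self_eq_one {t : SpecialLinearGroup (Fin 2) K} (ht : t ≠ 1)
    (htt : t * t = 1) : Nat.card (Subgroup.centralizer {t}) = Nat.card K := by
  rw [card_centralizer_eq_card_conic (notMem_range_scalar_of_ne_one ht),
    (mul_self_eq_one_iff_trace_eq_zero ht).1 htt]
  exact card_conic_zero

theorem card_centralizer_le_of_mul_self_ne_one [Finite K] {c : SpecialLinearGroup (Fin 2) K}
    (hc : c * c ≠ 1) : Nat.card (Subgroup.centralizer {c}) ≤ Nat.card K + 1 := by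
  have hc1 : c ≠ 1 := fun h => hc (by rw [h, one_mul])
  rw [card_centralizer_eq_card_conic (notMem_range_scalar_of_ne_one hc1)]
  exact card_conic_le ((mul_self_eq_one_iff_trace_eq_zero hc1).not.1 hc)

theorem eq_or_eq_inv_of_commute_of_isConj {c x : SpecialLinearGroup (Fin 2) K} (hc : c * c ≠ 1)
    (hcomm : Commute x c) (hconj : IsConj c x) : x = c ∨ x = c⁻¹ := by
  have hc1 : c ≠ 1 := fun h => hc (by rw [h, one_mul])
  have hτ := (mul_self_eq_one_iff_trace_eq_zero hc1).not.1 hc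
  obtain ⟨a, b, hx⟩ := exists_eq_smul_one_add_smul_of_commute (notMem_range_scalar_of_ne_one hc1)
    (commute_coe_specialLinearGroup.2 hcomm)
  have htrace : trace (x : Matrix (Fin 2) (Fin 2) K) = trace (c : Matrix (Fin 2) (Fin 2) K) := by
    obtain ⟨g, rfl⟩ := isConj_iff.1 hconj
    rw [coe_mul, trace_mul_comm, ← coe_mul, inv_mul_cancel_left]
  obtain rfl : b = 1 := by
    rw [← hx, trace_smul_one_add_smul, CharTwo.two_eq_zero, zero_mul, zero_add] at htrace
    exact mul_right_cancel₀ hτ (htrace.trans (one_mul _).symm)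
  have ha : a * (a + trace (c : Matrix (Fin 2) (Fin 2) K)) = 0 := by
    have hdet := det_smul_one_add_smul (c : Matrix (Fin 2) (Fin 2) K) a 1
    rw [hx, x.det_coe, c.det_coe] at hdet
    linear_combination -hdet
  rcases mul_eq_zero.1 ha with ha | ha
  · exact .inl (specialLinearGroup_coe_inj.1 (by rw [← hx, ha, zero_smul, zero_add, one_smul]))
  · refine .inr (eq_inv_of_mul_eq_one_left (specialLinearGroup_coe_inj.1 ?_))
    rw [coe_mul, ← hx, one_smul, add_mul,
      mul_self_eq_trace_smul_sub_det_smul_one, c.det_coe, CharTwo.add_eq_zero.1 ha,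
      coe_one, smul_one_mul, one_smul, CharTwo.sub_eq_add, ← add_assoc,
      CharTwo.add_self_eq_zero, zero_add]

end SpecialLinear

section Order

open Matrix.SpecialLinearGroup (toGL toGL_injective)

theorem card_specialLinearGroup_mul_card_units (n R : Type*) [DecidableEq n] [Fintype n]
    [Nonempty n] [CommRing R] :
    Nat.card (SpecialLinearGroup n R) * Nat.card Rˣ = Nat.card (GL n R) := by
  have hrange : (toGL : SpecialLinearGroup n R →* GL n R).range =
      (GeneralLinearGroup.det : GL n R →* Rˣ).ker := by
    refine le_antisymm ?_ fun A hA =>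
      ⟨⟨A, congrArg Units.val (MonoidHom.mem_ker.1 hA)⟩, Units.ext rfl⟩
    rintro _ ⟨A, rfl⟩
    exact Units.ext A.2
  rw [Nat.card_congr (MonoidHom.ofInjective toGL_injective).toEquiv, hrange,
    ← Nat.card_congr (QuotientGroup.quotientKerEquivOfSurjective _
      (GeneralLinearGroup.det_surjective (n := n) (R := R))).toEquiv, mul_comm,
    ← Subgroup.card_eq_card_quotient_mul_card_subgroup]

theorem card_specialLinearGroup_fin_two (K : Type*) [Field K] [Finite K] :
    Nat.card (SpecialLinearGroup (Fin 2) K) =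
      Nat.card K * ((Nat.card K - 1) * (Nat.card K + 1)) := by
  have := Fintype.ofFinite K
  have hpos : 0 < Nat.card K - 1 := Nat.sub_pos_of_lt Finite.one_lt_card
  refine Nat.eq_of_mul_eq_mul_right hpos ?_
  calc Nat.card (SpecialLinearGroup (Fin 2) K) * (Nat.card K - 1)
      = Nat.card (GL (Fin 2) K) := by
        rw [← Nat.card_units, card_specialLinearGroup_mul_card_units]
    _ = (Nat.card K ^ 2 - 1 ^ 2) * (Nat.card K ^ 2 - Nat.card K) := by
        rw [card_GL_field, Fin.prod_univ_two, ← Nat.card_eq_fintype_card]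
        simp
    _ = (Nat.card K + 1) * (Nat.card K - 1) * (Nat.card K * (Nat.card K - 1)) := by
        rw [Nat.sq_sub_sq, sq, ← Nat.mul_sub_one]
    _ = _ := by ring

end Order

theorem center_specialLinearGroup_fin_two_eq_bot [CharP K 2] :
    Subgroup.center (SpecialLinearGroup (Fin 2) K) = ⊥ := by
  refine (Subgroup.eq_bot_iff_forall _).2 fun c hc => ?_
  by_contra hc1
  exact notMem_range_scalar_of_ne_one hc1
    ⟨_, SpecialLinearGroup.scalar_eq_self_of_mem_center hc 0⟩

theorem nonempty_projectiveSpecialLinearGroup_mulEquiv [CharP K 2] :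
    Nonempty (ProjectiveSpecialLinearGroup (Fin 2) K ≃* SpecialLinearGroup (Fin 2) K) :=
  ⟨(QuotientGroup.quotientMulEquivOfEq center_specialLinearGroup_fin_two_eq_bot).trans
    QuotientGroup.quotientBot⟩

theorem card_centralizer_mulEquiv {G G' : Type*} [Group G] [Group G'] (e : G ≃* G') (g : G) :
    Nat.card (Subgroup.centralizer {e g}) = Nat.card (Subgroup.centralizer {g}) := by
  refine (Nat.card_congr (e.toEquiv.subtypeEquiv fun x => ?_)).symm
  simp only [Subgroup.mem_centralizer_singleton_iff, MulEquiv.toEquiv_eq_coe, MulEquiv.coe_toEquiv,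
    ← map_mul, e.injective.eq_iff]

theorem eq_one_of_mem_of_mul_self_eq_one {G : Type*} [Group G] {C : Subgroup G}
    (hodd : Odd (Nat.card C)) {c : G} (hc : c ∈ C) (hcc : c * c = 1) : c = 1 := by
  rw [← orderOf_eq_one_iff]
  exact Nat.eq_one_of_dvd_coprimes hodd.coprime_two_left
    (orderOf_dvd_of_pow_eq_one (sq c ▸ hcc)) (C.orderOf_dvd_natCard hc)

section GeneralizedDihedral

variable {D E : Type*} [Group D] [Group E]

/-- `D` is the generalized dihedral group over its index-two subgroup `C`: every element outside
`C` is an involution, equivalently `D` is generated by `C` and an involution inverting `C`. -/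
structure IsGeneralizedDihedral (C : Subgroup D) : Prop where
  index_eq_two : C.index = 2
  mul_self_of_notMem : ∀ ⦃t⦄, t ∉ C → t * t = 1

namespace IsGeneralizedDihedral

variable {C : Subgroup D} {c t s : D}

theorem zpowers_r_one (n : ℕ) :
    IsGeneralizedDihedral (Subgroup.zpowers (DihedralGroup.r 1 : DihedralGroup n)) := by
  have hr (i : ZMod n) : DihedralGroup.r i ∈ Subgroup.zpowers (DihedralGroup.r 1) :=
    ⟨i.cast, by simp⟩
  have hsr (i : ZMod n) : DihedralGroup.sr i ∉ Subgroup.zpowers (DihedralGroup.r 1) := by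
    rintro ⟨k, hk⟩
    simp at hk
  refine ⟨Subgroup.index_eq_two_iff.2 ⟨DihedralGroup.sr 0, ?_⟩, ?_⟩
  · rintro (i | i)
    · exact .inr ⟨hr i, by simpa using hsr _⟩
    · exact .inl ⟨by simpa using hr _, hsr i⟩
  · rintro (i | i) hi
    · exact absurd (hr i) hi
    · exact DihedralGroup.sr_mul_self i

theorem comap_mulEquiv {C : Subgroup E} (hC : IsGeneralizedDihedral C) (φ : D ≃* E) :
    IsGeneralizedDihedral (C.comap φ.toMonoidHom) where
  index_eq_two := by
    rw [Subgroup.index_comap_of_surjective C φ.surjective, hC.index_eq_two]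
  mul_self_of_notMem t ht := φ.injective <| by
    rw [map_mul, map_one]
    exact hC.mul_self_of_notMem ht

theorem exists_of_mulEquiv_dihedralGroup {n : ℕ} (φ : D ≃* DihedralGroup n) :
    ∃ C : Subgroup D, IsGeneralizedDihedral C ∧ Nat.card C = n := by
  refine ⟨_, (zpowers_r_one n).comap_mulEquiv φ, ?_⟩
  rw [Subgroup.comap_equiv_eq_map_symm', Subgroup.card_map_of_injective φ.symm.injective,
    Nat.card_zpowers, DihedralGroup.orderOf_r_one]

theorem exists_notMem (hC : IsGeneralizedDihedral C) : ∃ t, t ∉ C := by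
  by_contra! h
  have := hC.index_eq_two
  rw [(Subgroup.eq_top_iff' C).2 h, Subgroup.index_top] at this
  exact absurd this (by decide)

theorem conj_eq_inv (hC : IsGeneralizedDihedral C) (ht : t ∉ C) (hc : c ∈ C) :
    t * c * t⁻¹ = c⁻¹ := by
  rw [inv_eq_of_mul_eq_one_left (hC.mul_self_of_notMem ht), eq_inv_iff_mul_eq_one, mul_assoc]
  exact hC.mul_self_of_notMem ((C.mul_mem_cancel_right hc).not.2 ht)

theorem commute (hC : IsGeneralizedDihedral C) (hc : c ∈ C) (hs : s ∈ C) : Commute c s := by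
  obtain ⟨t, ht⟩ := hC.exists_notMem
  have hinv : (s * c)⁻¹ = (c * s)⁻¹ := by
    rw [← hC.conj_eq_inv ht (mul_mem hc hs), _root_.mul_inv_rev, ← hC.conj_eq_inv ht hc,
      ← hC.conj_eq_inv ht hs, conj_mul]
  exact (inv_injective hinv).symm

theorem isConj_of_notMem (hC : IsGeneralizedDihedral C) (hodd : Odd (Nat.card C))
    (hs : s ∉ C) (ht : t ∉ C) : IsConj s t := by
  have hmem : s⁻¹ * t ∈ C := by
    rw [Subgroup.mul_mem_iff_of_index_two hC.index_eq_two, inv_mem_iff]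
    exact iff_of_false hs ht
  obtain ⟨d, hd : d ^ 2 = _⟩ :=
    hodd.coprime_two_right.pow_left_bijective.surjective ⟨s⁻¹ * t, hmem⟩
  have hsd : s * d * d = t := by
    rw [mul_assoc, ← sq, ← C.coe_pow, hd, mul_inv_cancel_left]
  refine isConj_iff.2 ⟨d⁻¹, ?_⟩
  rw [inv_inv, ← hsd, ← hC.conj_eq_inv hs d.2, inv_mul_cancel_right]

theorem card_centralizer_of_notMem (hC : IsGeneralizedDihedral C) (hodd : Odd (Nat.card C))
    (ht : t ∉ C) : Nat.card (Subgroup.centralizer {t}) = 2 := by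
  have hmem {x : D} (hx : x ∈ C) (hxt : Commute x t) : x = 1 := by
    refine eq_one_of_mem_of_mul_self_eq_one hodd hx (mul_eq_one_iff_eq_inv.2 ?_)
    rw [← hC.conj_eq_inv ht hx, ← hxt.eq, mul_inv_cancel_right]
  have hcent : Subgroup.centralizer {t} = Subgroup.zpowers t := by
    refine le_antisymm (fun x hx => ?_) ?_
    · have hxt : Commute x t := Subgroup.mem_centralizer_singleton_iff.1 hx
      by_cases hxC : x ∈ C
      · exact hmem hxC hxt ▸ one_mem _
      · have hxtC : x * t ∈ C := (Subgroup.mul_mem_iff_of_index_two hC.index_eq_two).2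
          (iff_of_false hxC ht)
        rw [mul_eq_one_iff_eq_inv.1 (hmem hxtC (hxt.mul_left (.refl t)))]
        exact inv_mem (Subgroup.mem_zpowers t)
    · rw [Subgroup.zpowers_le]
      exact Subgroup.mem_centralizer_singleton_iff.2 rfl
  rw [hcent, Nat.card_zpowers]
  exact orderOf_eq_prime (sq t ▸ hC.mul_self_of_notMem ht) fun h => ht (h ▸ one_mem C)

end IsGeneralizedDihedral

end GeneralizedDihedral

theorem sum_comp_eq_sum_card_fiber_mul {α ι : Type*} [Fintype α] {f : α → ι} {s : Finset ι}
    (hf : ∀ a, f a ∈ s) (g : ι → ℕ) :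
    ∑ a, g (f a) = ∑ k ∈ s, Nat.card {a // f a = k} * g k := by
  classical
  rw [← Finset.sum_fiberwise_of_maps_to (fun a _ => hf a)]
  refine Finset.sum_congr rfl fun k _ => ?_
  rw [Finset.sum_congr rfl fun a ha => congrArg g (Finset.mem_filter.1 ha).2, Finset.sum_const,
    smul_eq_mul, Nat.card_eq_fintype_card, Fintype.card_subtype]

section Semiregular

open MulAction

variable {D X : Type*} [Group D] [MulAction D X]

/-- The group acts on `X` with a fixed point `x₀`, and its subgroup `C` acts semiregularly on the
remaining points: an element `c ≠ 1` of `C` fixes `x₀` only. -/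
structure IsSemiregularOff (C : Subgroup D) (x₀ : X) : Prop where
  smul_eq : ∀ d : D, d • x₀ = x₀
  eq_of_smul_eq : ∀ ⦃c⦄, c ∈ C → c ≠ 1 → ∀ ⦃x : X⦄, c • x = x → x = x₀

namespace IsSemiregularOff

variable {C : Subgroup D} {x₀ x : X}

theorem orbit_eq (h : IsSemiregularOff C x₀) : orbit D x₀ = {x₀} :=
  Set.eq_singleton_iff_unique_mem.2
    ⟨mem_orbit_self x₀, Set.forall_mem_range.2 h.smul_eq⟩

theorem card_stabilizer_dvd_index [C.Normal] (h : IsSemiregularOff C x₀) (hx : x ≠ x₀) :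
    Nat.card (stabilizer D x) ∣ C.index := by
  have hbot : C ⊓ stabilizer D x = ⊥ := (Subgroup.eq_bot_iff_forall _).2 fun c hc =>
    by_contra fun hc1 => hx (h.eq_of_smul_eq hc.1 hc1 hc.2)
  rw [← Subgroup.relIndex_bot_left, ← hbot, Subgroup.inf_relIndex_right]
  exact C.relIndex_dvd_index_of_normal _

theorem card_orbit_of_ne (h : IsSemiregularOff C x₀) (hC : C.index = 2) (hx : x ≠ x₀) :
    Nat.card (orbit D x) = Nat.card C ∨ Nat.card (orbit D x) = 2 * Nat.card C := by
  have := Subgroup.normal_of_index_eq_two hC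
  have hstab := (Nat.dvd_prime Nat.prime_two).1 (hC ▸ h.card_stabilizer_dvd_index hx)
  have hmul : Nat.card (orbit D x) * Nat.card (stabilizer D x) = Nat.card C * 2 := by
    rw [Nat.card_coe_set_eq, ← index_stabilizer, Subgroup.index_mul_card, ← hC, C.card_mul_index]
  rcases hstab with hs | hs <;> rw [hs] at hmul <;> omega

theorem card_orbit_mem (h : IsSemiregularOff C x₀) (hC : C.index = 2)
    (ω : orbitRel.Quotient D X) :
    Nat.card ω.orbit ∈ ({1, Nat.card C, 2 * Nat.card C} : Finset ℕ) := by
  induction ω using Quotient.inductionOn' with | h x =>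
  rw [orbitRel.Quotient.orbit_mk, Finset.mem_insert, Finset.mem_insert, Finset.mem_singleton]
  obtain rfl | hx := eq_or_ne x x₀
  · rw [h.orbit_eq]
    exact .inl Nat.card_unique
  · exact .inr (h.card_orbit_of_ne hC hx)

theorem sum_card_fixedBy [Fintype D] {m : ℕ} (h : IsSemiregularOff C x₀) (hC : C.index = 2)
    (hm : ∀ t ∉ C, Nat.card (fixedBy X t) = m) :
    ∑ d : D, Nat.card (fixedBy X d) + 1 = Nat.card X + Nat.card C * (m + 1) := by
  classical
  have hfix (d : D) : Nat.card (fixedBy X d) + (if d = 1 then 1 else 0) =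
      (if d = 1 then Nat.card X else 0) + if d ∈ C then 1 else m := by
    split_ifs with h1 hdC hdC
    · rw [h1, fixedBy_one_eq_univ, Nat.card_univ]
    · exact absurd (h1 ▸ one_mem C) hdC
    · have : fixedBy X d = {x₀} :=
        Set.eq_singleton_iff_unique_mem.2 ⟨h.smul_eq d, fun x => (h.eq_of_smul_eq hdC h1 ·)⟩
      rw [this, Nat.card_unique]
    · rw [hm d hdC, add_zero, zero_add]
  have hin : Finset.card {d : D | d ∈ C} = Nat.card C := by
    rw [← Fintype.card_subtype, ← Nat.card_eq_fintype_card]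
  have hout : Finset.card {d : D | d ∉ C} = Nat.card C := by
    have := Finset.card_filter_add_card_filter_not (s := Finset.univ) (fun d : D => d ∈ C)
    rw [hin, Finset.card_univ, ← Nat.card_eq_fintype_card, ← C.card_mul_index, hC] at this
    omega
  have hsum := Finset.sum_congr rfl fun d (_ : d ∈ Finset.univ) => hfix d
  rw [Finset.sum_add_distrib, Finset.sum_add_distrib, Finset.sum_ite_eq', Finset.sum_ite_eq',
    if_pos (Finset.mem_univ _), if_pos (Finset.mem_univ _), Finset.sum_ite, Finset.sum_const,
    Finset.sum_const, hin, hout] at hsum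
  rw [hsum, smul_eq_mul, smul_eq_mul]
  ring

variable [Finite D]

theorem card_orbits_of_card_eq_one (h : IsSemiregularOff C x₀) (hC : C.index = 2)
    (hn : Nat.card C ≠ 1) :
    Nat.card {ω : orbitRel.Quotient D X // Nat.card ω.orbit = 1} = 1 := by
  have := Nat.card_pos (α := C)
  rw [Nat.card_eq_one_iff_exists]
  refine ⟨⟨Quotient.mk'' x₀, by rw [orbitRel.Quotient.orbit_mk, h.orbit_eq, Nat.card_unique]⟩, ?_⟩
  rintro ⟨ω, hω⟩
  induction ω using Quotient.inductionOn' with | h x =>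
  rw [orbitRel.Quotient.orbit_mk] at hω
  obtain rfl : x = x₀ := by
    by_contra hx
    rcases h.card_orbit_of_ne hC hx with h' | h' <;> omega
  rfl

theorem sum_card_orbit (h : IsSemiregularOff C x₀) (hC : C.index = 2) (hn : Nat.card C ≠ 1)
    [Fintype (orbitRel.Quotient D X)] (g : ℕ → ℕ) :
    ∑ ω : orbitRel.Quotient D X, g (Nat.card ω.orbit) = g 1 +
      Nat.card {ω : orbitRel.Quotient D X // Nat.card ω.orbit = Nat.card C} * g (Nat.card C) +
      Nat.card {ω : orbitRel.Quotient D X // Nat.card ω.orbit = 2 * Nat.card C} *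
        g (2 * Nat.card C) := by
  have hpos := Nat.card_pos (α := C)
  have hnotMem : 1 ∉ ({Nat.card C, 2 * Nat.card C} : Finset ℕ) := by
    rw [Finset.mem_insert, Finset.mem_singleton]
    omega
  rw [sum_comp_eq_sum_card_fiber_mul (h.card_orbit_mem hC), Finset.sum_insert hnotMem,
    Finset.sum_pair (by omega), h.card_orbits_of_card_eq_one hC hn, one_mul, add_assoc]

variable [Finite X]

theorem card_eq (h : IsSemiregularOff C x₀) (hC : C.index = 2) (hn : Nat.card C ≠ 1) :
    Nat.card X = 1 +
      Nat.card {ω : orbitRel.Quotient D X // Nat.card ω.orbit = Nat.card C} * Nat.card C +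
      Nat.card {ω : orbitRel.Quotient D X // Nat.card ω.orbit = 2 * Nat.card C} *
        (2 * Nat.card C) := by
  have := Fintype.ofFinite (orbitRel.Quotient D X)
  rw [Nat.card_congr (selfEquivSigmaOrbits' D X), Nat.card_sigma]
  exact h.sum_card_orbit hC hn id

theorem card_orbits_add_one_eq_card_fixedBy {m : ℕ} (h : IsSemiregularOff C x₀) (hC : C.index = 2)
    (hn : Nat.card C ≠ 1) (hm : ∀ t ∉ C, Nat.card (fixedBy X t) = m) :
    Nat.card {ω : orbitRel.Quotient D X // Nat.card ω.orbit = Nat.card C} + 1 = m := by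
  classical
  have := Fintype.ofFinite D
  have := Fintype.ofFinite X
  have := Fintype.ofFinite (orbitRel.Quotient D X)
  have hburnside := sum_card_fixedBy_eq_card_orbits_mul_card_group D X
  have horbits := h.sum_card_orbit hC hn fun _ => 1
  have hfixed := h.sum_card_fixedBy hC hm
  simp only [← Nat.card_eq_fintype_card, ← C.card_mul_index, hC] at hburnside
  rw [Finset.sum_const, Finset.card_univ, smul_eq_mul, mul_one, mul_one, mul_one,
    ← Nat.card_eq_fintype_card] at horbits
  rw [hburnside, horbits, h.card_eq hC hn] at hfixed
  refine Nat.eq_of_mul_eq_mul_left (Nat.card_pos (α := C)) ?_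
  linarith

end IsSemiregularOff

end Semiregular

section Quotient

open MulAction

variable {G : Type*} [Group G] {H : Subgroup G}

theorem mul_self_eq_one_of_isConj {a b : G} (h : IsConj a b) (ha : a * a = 1) : b * b = 1 := by
  obtain ⟨g, rfl⟩ := isConj_iff.1 h
  rw [conj_mul, ha, mul_one, mul_inv_cancel]

theorem subgroup_smul_mk {K : Subgroup G} (x : K) (g : G) :
    x • (g : G ⧸ H) = ((x * g : G) : G ⧸ H) :=
  rfl

theorem smul_mk_eq_mk_iff {K : Subgroup G} (x : K) (g : G) :
    x • (g : G ⧸ H) = g ↔ g⁻¹ * x * g ∈ H := by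
  rw [subgroup_smul_mk, eq_comm, QuotientGroup.eq, mul_assoc]

theorem orbit_centralizer_mk_one_eq_fixedBy (s : H)
    (hfusion : ∀ t : H, IsConj (t : G) s → IsConj t s) :
    orbit (Subgroup.centralizer {(s : G)}) ((1 : G) : G ⧸ H) = fixedBy (G ⧸ H) s := by
  ext x
  induction x using QuotientGroup.induction_on with | H g =>
  rw [mem_fixedBy, smul_mk_eq_mk_iff]
  constructor
  · rintro ⟨⟨z, hzs⟩, hz : _ • ((1 : G) : G ⧸ H) = g⟩
    rw [subgroup_smul_mk, mul_one, QuotientGroup.eq] at hz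
    rw [Subgroup.mem_centralizer_singleton_iff] at hzs
    have hconj : g⁻¹ * s * g = (z⁻¹ * g)⁻¹ * s * (z⁻¹ * g) :=
      calc g⁻¹ * s * g = g⁻¹ * (s * z) * (z⁻¹ * g) := by group
        _ = g⁻¹ * (z * s) * (z⁻¹ * g) := by rw [hzs]
        _ = (z⁻¹ * g)⁻¹ * s * (z⁻¹ * g) := by group
    rw [hconj]
    exact mul_mem (mul_mem (inv_mem hz) s.2) hz
  · intro hg
    obtain ⟨h, hh⟩ := isConj_iff.1 (hfusion ⟨_, hg⟩ (isConj_iff.2 ⟨g, by group⟩))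
    have hs : (s : G) = h * (g⁻¹ * s * g) * (h : G)⁻¹ := congrArg H.subtype hh.symm
    have hcomm : g * (h : G)⁻¹ * s = s * (g * (h : G)⁻¹) :=
      calc g * (h : G)⁻¹ * s = g * (h : G)⁻¹ * (h * (g⁻¹ * s * g) * (h : G)⁻¹) :=
            congrArg (g * (h : G)⁻¹ * ·) hs
        _ = s * (g * (h : G)⁻¹) := by group
    refine ⟨⟨g * (h : G)⁻¹, Subgroup.mem_centralizer_singleton_iff.2 hcomm⟩, ?_⟩
    dsimp only
    rw [subgroup_smul_mk, mul_one]
    exact QuotientGroup.mk_mul_of_mem g (inv_mem h.2)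

theorem card_fixedBy_mul_card_centralizer (s : H)
    (hfusion : ∀ t : H, IsConj (t : G) s → IsConj t s) :
    Nat.card (fixedBy (G ⧸ H) s) * Nat.card (Subgroup.centralizer {s}) =
      Nat.card (Subgroup.centralizer {(s : G)}) := by
  rw [← orbit_centralizer_mk_one_eq_fixedBy s hfusion]
  set Z := Subgroup.centralizer {(s : G)} with hZ
  have hstab : stabilizer Z ((1 : G) : G ⧸ H) = H.subgroupOf Z := by
    ext z
    rw [mem_stabilizer_iff, smul_mk_eq_mk_iff, inv_one, one_mul, mul_one,
      Subgroup.mem_subgroupOf]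
  have hcent : Subgroup.centralizer {s} = Z.subgroupOf H := by
    ext x
    rw [Subgroup.mem_subgroupOf, hZ, Subgroup.mem_centralizer_singleton_iff,
      Subgroup.mem_centralizer_singleton_iff, ← Subtype.coe_inj, H.coe_mul, H.coe_mul]
  have hcard : Nat.card (Z.subgroupOf H) = Nat.card (H.subgroupOf Z) := by
    rw [← Subgroup.card_map_of_injective H.subtype_injective, Subgroup.subgroupOf_map_subtype,
      inf_comm, ← Subgroup.subgroupOf_map_subtype,
      Subgroup.card_map_of_injective Z.subtype_injective]
  rw [hcent, hcard, ← hstab, Nat.card_coe_set_eq, ← index_stabilizer, Subgroup.index_mul_card]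

namespace IsGeneralizedDihedral

variable {C : Subgroup H} {c s : H}

theorem mem_map_of_commute [Finite G] (hC : IsGeneralizedDihedral C) (hc : c ∈ C)
    (hcard : Nat.card (Subgroup.centralizer {(c : G)}) < 2 * Nat.card C) {x : G}
    (hx : Commute x c) : x ∈ C.map H.subtype := by
  have hle : C.map H.subtype ≤ Subgroup.centralizer {(c : G)} := by
    rintro _ ⟨d, hd, rfl⟩
    exact Subgroup.mem_centralizer_singleton_iff.2 (congrArg H.subtype (hC.commute hd hc).eq)
  have hmap : Nat.card (C.map H.subtype) = Nat.card C :=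
    Subgroup.card_map_of_injective H.subtype_injective
  obtain ⟨k, hk⟩ := Subgroup.card_dvd_of_le hle
  have hk2 : k < 2 := by
    rw [hk, hmap, mul_comm] at hcard
    exact lt_of_mul_lt_mul_right hcard (Nat.zero_le _)
  have hge : Nat.card (Subgroup.centralizer {(c : G)}) ≤ Nat.card (C.map H.subtype) := by
    rw [hk]
    exact (Nat.mul_le_mul_left _ (Nat.le_of_lt_succ hk2)).trans_eq (mul_one _)
  rw [Subgroup.eq_of_le_of_card_ge hle hge]
  exact Subgroup.mem_centralizer_singleton_iff.2 hx

theorem mem_of_conj_mem [Finite G] (hC : IsGeneralizedDihedral C) (hodd : Odd (Nat.card C))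
    (hc : c ∈ C) (hc1 : c ≠ 1)
    (hcard : Nat.card (Subgroup.centralizer {(c : G)}) < 2 * Nat.card C)
    (hconj : ∀ x : G, Commute x c → IsConj (c : G) x → x = c ∨ x = (c : G)⁻¹) {g : G}
    (hg : g⁻¹ * c * g ∈ H) : g ∈ H := by
  have hmem {x : G} (hx : x * c * x⁻¹ = c) : x ∈ H :=
    Subgroup.map_subtype_le C (hC.mem_map_of_commute hc hcard (mul_inv_eq_iff_eq_mul.1 hx))
  have hgC : (⟨_, hg⟩ : H) ∈ C := by
    by_contra hgC
    refine hc1 (eq_one_of_mem_of_mul_self_eq_one hodd hc (Subtype.ext ?_))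
    exact mul_self_eq_one_of_isConj (isConj_iff.2 ⟨g, by group⟩)
      (congrArg H.subtype (hC.mul_self_of_notMem hgC))
  have hcomm : Commute (g⁻¹ * c * g) c := congrArg H.subtype (hC.commute hgC hc).eq
  rcases hconj _ hcomm (isConj_iff.2 ⟨g⁻¹, by rw [inv_inv]⟩) with h | h
  · refine inv_mem_iff.1 (hmem ?_)
    rw [inv_inv, h]
  · obtain ⟨t, ht⟩ := hC.exists_notMem
    have htc : t * c * (t : G)⁻¹ = (c : G)⁻¹ := congrArg H.subtype (hC.conj_eq_inv ht hc)
    refine (H.mul_mem_cancel_right t.2).1 (hmem ?_)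
    calc g * t * c * (g * t)⁻¹ = g * (t * c * (t : G)⁻¹) * g⁻¹ := by group
      _ = g * (g⁻¹ * c * g) * g⁻¹ := by rw [htc, h]
      _ = c := by group

theorem isSemiregularOff_mk_one [Finite G] (hC : IsGeneralizedDihedral C)
    (hodd : Odd (Nat.card C))
    (hcard : ∀ c ∈ C, c ≠ 1 → Nat.card (Subgroup.centralizer {(c : G)}) < 2 * Nat.card C)
    (hconj : ∀ c ∈ C, c ≠ 1 → ∀ x : G, Commute x c → IsConj (c : G) x →
      x = c ∨ x = (c : G)⁻¹) :
    IsSemiregularOff C ((1 : G) : G ⧸ H) where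
  smul_eq d := by
    rw [smul_mk_eq_mk_iff, inv_one, one_mul, mul_one]
    exact d.2
  eq_of_smul_eq c hc hc1 x hx := by
    induction x using QuotientGroup.induction_on with | H g =>
    rw [smul_mk_eq_mk_iff] at hx
    rw [QuotientGroup.eq, mul_one, inv_mem_iff]
    exact hC.mem_of_conj_mem hodd hc hc1 (hcard c hc hc1) (hconj c hc hc1) hx

theorem card_fixedBy_mul_two (hC : IsGeneralizedDihedral C) (hodd : Odd (Nat.card C))
    (hs : s ∉ C) :
    Nat.card (fixedBy (G ⧸ H) s) * 2 = Nat.card (Subgroup.centralizer {(s : G)}) := by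
  rw [← card_fixedBy_mul_card_centralizer, hC.card_centralizer_of_notMem hodd hs]
  intro t ht
  have hsq : (t : G) * t = 1 :=
    mul_self_eq_one_of_isConj ht.symm (congrArg H.subtype (hC.mul_self_of_notMem hs))
  refine hC.isConj_of_notMem hodd (fun htC => hs ?_) hs
  rw [eq_one_of_mem_of_mul_self_eq_one hodd htC (Subtype.ext hsq), H.coe_one,
    isConj_one_right, OneMemClass.coe_eq_one] at ht
  exact ht ▸ one_mem C

end IsGeneralizedDihedral

end Quotient

section CharTwo

open MulAction

variable {K : Type*} [Field K] [CharP K 2] {G : Type*} [Group G]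
  {H : Subgroup G} {C : Subgroup H}

namespace IsGeneralizedDihedral

theorem isSemiregularOff_of_mulEquiv_specialLinearGroup
    (e : G ≃* SpecialLinearGroup (Fin 2) K) [Finite K] (hC : IsGeneralizedDihedral C)
    (hodd : Odd (Nat.card C)) (hcard : Nat.card K + 1 < 2 * Nat.card C) :
    IsSemiregularOff C ((1 : G) : G ⧸ H) := by
  have := Finite.of_equiv _ e.symm.toEquiv
  have hsq {c : H} (hc : c ∈ C) (hc1 : c ≠ 1) : e c * e c ≠ 1 := by
    rw [← map_mul, ← H.coe_mul, Ne, EmbeddingLike.map_eq_one_iff, OneMemClass.coe_eq_one]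
    exact fun h => hc1 (eq_one_of_mem_of_mul_self_eq_one hodd hc h)
  refine hC.isSemiregularOff_mk_one hodd (fun c hc hc1 => ?_) fun c hc hc1 x hx hcx => ?_
  · rw [← card_centralizer_mulEquiv e]
    exact (card_centralizer_le_of_mul_self_ne_one (hsq hc hc1)).trans_lt hcard
  · rw [← e.injective.eq_iff, ← e.injective.eq_iff, map_inv]
    exact eq_or_eq_inv_of_commute_of_isConj (hsq hc hc1) (hx.map e) (e.toMonoidHom.map_isConj hcx)

theorem card_fixedBy_mul_two_eq_card_field
    (e : G ≃* SpecialLinearGroup (Fin 2) K) (hC : IsGeneralizedDihedral C)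
    (hodd : Odd (Nat.card C)) {t : H} (ht : t ∉ C) :
    Nat.card (fixedBy (G ⧸ H) t) * 2 = Nat.card K := by
  rw [hC.card_fixedBy_mul_two hodd ht, ← card_centralizer_mulEquiv e]
  refine card_centralizer_of_mul_self_eq_one ?_ ?_
  · rw [Ne, EmbeddingLike.map_eq_one_iff, OneMemClass.coe_eq_one]
    exact fun h => ht (h ▸ one_mem C)
  · rw [← map_mul, ← H.coe_mul, hC.mul_self_of_notMem ht, H.coe_one, map_one]

variable [Finite K]

theorem card_orbits_eq_half_card_field_sub_one
    (e : G ≃* SpecialLinearGroup (Fin 2) K) (hC : IsGeneralizedDihedral C)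
    (hodd : Odd (Nat.card C)) (hcard : Nat.card K + 1 < 2 * Nat.card C) :
    Nat.card {ω : orbitRel.Quotient H (G ⧸ H) // Nat.card ω.orbit = Nat.card C} =
      Nat.card K / 2 - 1 := by
  have := Finite.of_equiv _ e.symm.toEquiv
  have hK := Finite.one_lt_card (α := K)
  refine Nat.eq_sub_of_add_eq ?_
  have hsemi := hC.isSemiregularOff_of_mulEquiv_specialLinearGroup e hodd hcard
  exact hsemi.card_orbits_add_one_eq_card_fixedBy hC.index_eq_two (by omega) fun t ht =>
    Nat.eq_div_of_mul_eq_left two_ne_zero (hC.card_fixedBy_mul_two_eq_card_field e hodd ht)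

theorem card_quotient_mul_card_eq {k : ℕ} (hk : Nat.card K = 2 * (k + 1))
    (e : G ≃* SpecialLinearGroup (Fin 2) K) (hC : IsGeneralizedDihedral C)
    (hodd : Odd (Nat.card C)) (hcard : Nat.card K + 1 < 2 * Nat.card C) :
    (1 + k * Nat.card C +
      Nat.card {ω : orbitRel.Quotient H (G ⧸ H) // Nat.card ω.orbit = 2 * Nat.card C} *
        (2 * Nat.card C)) * Nat.card C = (k + 1) * ((2 * k + 1) * (2 * k + 3)) := by
  have := Finite.of_equiv _ e.symm.toEquiv
  have hX := (hC.isSemiregularOff_of_mulEquiv_specialLinearGroup e hodd hcard).card_eq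
    hC.index_eq_two (by omega)
  have hG := card_specialLinearGroup_fin_two K
  rw [← Nat.card_congr e.toEquiv, H.card_eq_card_quotient_mul_card_subgroup, ← C.card_mul_index,
    hC.index_eq_two, hk] at hG
  rw [hC.card_orbits_eq_half_card_field_sub_one e hodd hcard,
    show Nat.card K / 2 - 1 = k by omega] at hX
  rw [← hX]
  refine Nat.eq_of_mul_eq_mul_right two_pos ?_
  calc Nat.card (G ⧸ H) * Nat.card C * 2
      = 2 * (k + 1) * ((2 * (k + 1) - 1) * (2 * (k + 1) + 1)) := by rw [← hG, mul_assoc]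
    _ = (k + 1) * ((2 * k + 1) * (2 * k + 3)) * 2 := by
        rw [show 2 * (k + 1) - 1 = 2 * k + 1 by omega]
        ring

end IsGeneralizedDihedral

variable [Finite K]

theorem even_card_of_charP_two : Even (Nat.card K) := by
  have := Fintype.ofFinite K
  rw [even_iff_two_dvd, ← CharP.cast_eq_zero_iff K, Nat.card_eq_fintype_card,
    Nat.cast_card_eq_zero]

theorem exists_card_eq_two_mul_succ : ∃ k, Nat.card K = 2 * (k + 1) := by
  obtain ⟨m, hm⟩ := even_card_of_charP_two (K := K)
  have := Nat.card_pos (α := K)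
  exact ⟨m - 1, by omega⟩

theorem subdegrees_dihedralGroup_card_sub_one (hK : 4 ≤ Nat.card K)
    (e : G ≃* SpecialLinearGroup (Fin 2) K) (φ : H ≃* DihedralGroup (Nat.card K - 1)) :
    (∀ ω : orbitRel.Quotient H (G ⧸ H),
      Nat.card ω.orbit ∈ ({1, Nat.card K - 1, 2 * (Nat.card K - 1)} : Set ℕ)) ∧
    Nat.card {ω : orbitRel.Quotient H (G ⧸ H) // Nat.card ω.orbit = 1} = 1 ∧
    Nat.card {ω : orbitRel.Quotient H (G ⧸ H) // Nat.card ω.orbit = Nat.card K - 1} =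
      Nat.card K / 2 - 1 ∧
    Nat.card {ω : orbitRel.Quotient H (G ⧸ H) // Nat.card ω.orbit = 2 * (Nat.card K - 1)} =
      1 := by
  have := Finite.of_equiv _ e.symm.toEquiv
  obtain ⟨C, hC, hn⟩ := IsGeneralizedDihedral.exists_of_mulEquiv_dihedralGroup φ
  have hodd : Odd (Nat.card C) := hn ▸ Nat.Even.sub_odd (by omega) even_card_of_charP_two odd_one
  have hcard : Nat.card K + 1 < 2 * Nat.card C := by omega
  have hsemi := hC.isSemiregularOff_of_mulEquiv_specialLinearGroup e hodd hcard
  rw [← hn]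
  refine ⟨fun ω => ?_, hsemi.card_orbits_of_card_eq_one hC.index_eq_two (by omega),
    hC.card_orbits_eq_half_card_field_sub_one e hodd hcard, ?_⟩
  · have hmem := hsemi.card_orbit_mem hC.index_eq_two ω
    rwa [Finset.mem_insert, Finset.mem_insert, Finset.mem_singleton] at hmem
  · obtain ⟨k, hk⟩ := exists_card_eq_two_mul_succ (K := K)
    have htotal := hC.card_quotient_mul_card_eq hk e hodd hcard
    generalize Nat.card {ω : orbitRel.Quotient H (G ⧸ H) // _} = b at htotal ⊢
    rw [show Nat.card C = 2 * k + 1 by omega] at htotal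
    refine Nat.eq_of_mul_eq_mul_right (show 0 < 2 * (2 * k + 1) * (2 * k + 1) by positivity) ?_
    linarith

theorem subdegrees_dihedralGroup_card_add_one
    (e : G ≃* SpecialLinearGroup (Fin 2) K) (φ : H ≃* DihedralGroup (Nat.card K + 1)) :
    (∀ ω : orbitRel.Quotient H (G ⧸ H), Nat.card ω.orbit ∈ ({1, Nat.card K + 1} : Set ℕ)) ∧
    Nat.card {ω : orbitRel.Quotient H (G ⧸ H) // Nat.card ω.orbit = 1} = 1 ∧
    Nat.card {ω : orbitRel.Quotient H (G ⧸ H) // Nat.card ω.orbit = Nat.card K + 1} =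
      Nat.card K / 2 - 1 := by
  have := Finite.of_equiv _ e.symm.toEquiv
  obtain ⟨C, hC, hn⟩ := IsGeneralizedDihedral.exists_of_mulEquiv_dihedralGroup φ
  have hodd : Odd (Nat.card C) := hn ▸ even_card_of_charP_two.add_odd odd_one
  have hK := Nat.card_pos (α := K)
  have hcard : Nat.card K + 1 < 2 * Nat.card C := by omega
  have hsemi := hC.isSemiregularOff_of_mulEquiv_specialLinearGroup e hodd hcard
  rw [← hn]
  refine ⟨fun ω => ?_, hsemi.card_orbits_of_card_eq_one hC.index_eq_two (by omega),
    hC.card_orbits_eq_half_card_field_sub_one e hodd hcard⟩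
  have hempty : Nat.card
      {ω : orbitRel.Quotient H (G ⧸ H) // Nat.card ω.orbit = 2 * Nat.card C} = 0 := by
    obtain ⟨k, hk⟩ := exists_card_eq_two_mul_succ (K := K)
    have htotal := hC.card_quotient_mul_card_eq hk e hodd hcard
    generalize Nat.card {ω : orbitRel.Quotient H (G ⧸ H) // _} = b at htotal ⊢
    rw [show Nat.card C = 2 * k + 3 by omega] at htotal
    refine Nat.eq_of_mul_eq_mul_right (show 0 < 2 * (2 * k + 3) * (2 * k + 3) by positivity) ?_
    linarith
  have hne : Nat.card ω.orbit ≠ 2 * Nat.card C := fun hω =>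
    (Finite.card_eq_zero_iff.1 hempty).false ⟨ω, hω⟩
  have hmem := hsemi.card_orbit_mem hC.index_eq_two ω
  rw [Finset.mem_insert, Finset.mem_insert, Finset.mem_singleton] at hmem
  exact hmem.imp_right (·.resolve_right hne)

end CharTwo

/-- Let `q ≥ 4` be a power of `2` and let `F` be the field with `q` elements.
In the transitive action of `PSL(2,q)` on the cosets of a dihedral subgroup `D_{2(q−1)}`
of order `2(q−1)`, the subdegrees (the sizes of the orbits of the point stabilizer) are `1`,
the value `q−1` occurring with multiplicity `q/2 − 1`, and `2(q−1)` occurring once.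
In the transitive action of `PSL(2,q)` on the cosets of a dihedral subgroup `D_{2(q+1)}`
of order `2(q+1)`, the subdegrees are `1` and the value `q+1` occurring with
multiplicity `q/2 − 1`. -/
theorem stmt_7 (q f : ℕ) (hq : q = 2 ^ f) (hq4 : 4 ≤ q)
    (F : Type) [Field F] [Fintype F] (hF : Fintype.card F = q) :
    -- Part 1: the dihedral subgroup `D_{2(q-1)}`
    (∀ H : Subgroup (ProjectiveSpecialLinearGroup (Fin 2) F),
      Nonempty (H ≃* DihedralGroup (q - 1)) →
      -- all subdegrees lie in `{1, q-1, 2(q-1)}` …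
      (∀ ω : MulAction.orbitRel.Quotient H
          (ProjectiveSpecialLinearGroup (Fin 2) F ⧸ H),
        Nat.card ω.orbit ∈ ({1, q - 1, 2 * (q - 1)} : Set ℕ)) ∧
      -- … with the subdegree `1` occurring once (the fixed coset `H`),
      Nat.card {ω : MulAction.orbitRel.Quotient H
          (ProjectiveSpecialLinearGroup (Fin 2) F ⧸ H) // Nat.card ω.orbit = 1} = 1 ∧
      -- the subdegree `q-1` occurring with multiplicity `q/2 - 1`,
      Nat.card {ω : MulAction.orbitRel.Quotient H
          (ProjectiveSpecialLinearGroup (Fin 2) F ⧸ H) // Nat.card ω.orbit = q - 1} =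
        q / 2 - 1 ∧
      -- and the subdegree `2(q-1)` occurring once:
      Nat.card {ω : MulAction.orbitRel.Quotient H
          (ProjectiveSpecialLinearGroup (Fin 2) F ⧸ H) // Nat.card ω.orbit = 2 * (q - 1)} = 1)
    ∧
    -- Part 2: the dihedral subgroup `D_{2(q+1)}`
    (∀ H : Subgroup (ProjectiveSpecialLinearGroup (Fin 2) F),
      Nonempty (H ≃* DihedralGroup (q + 1)) →
      -- all subdegrees lie in `{1, q+1}` …
      (∀ ω : MulAction.orbitRel.Quotient H
          (ProjectiveSpecialLinearGroup (Fin 2) F ⧸ H),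
        Nat.card ω.orbit ∈ ({1, q + 1} : Set ℕ)) ∧
      -- … with the subdegree `1` occurring once,
      Nat.card {ω : MulAction.orbitRel.Quotient H
          (ProjectiveSpecialLinearGroup (Fin 2) F ⧸ H) // Nat.card ω.orbit = 1} = 1 ∧
      -- and the subdegree `q+1` occurring with multiplicity `q/2 - 1`:
      Nat.card {ω : MulAction.orbitRel.Quotient H
          (ProjectiveSpecialLinearGroup (Fin 2) F ⧸ H) // Nat.card ω.orbit = q + 1} =
        q / 2 - 1) := by
  have : CharP F 2 := charP_of_card_eq_prime_pow (hF.trans hq)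
  obtain ⟨e⟩ := nonempty_projectiveSpecialLinearGroup_mulEquiv (K := F)
  obtain rfl : Nat.card F = q := Nat.card_eq_fintype_card.trans hF
  exact ⟨fun _ ⟨φ⟩ => subdegrees_dihedralGroup_card_sub_one hq4 e φ,
    fun _ ⟨φ⟩ => subdegrees_dihedralGroup_card_add_one e φ⟩
end
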